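/- arXiv:2101.03984 — 3 statements merged into one kernel-verified Lean document; each statement's English description precedes it below -/
import Mathlib

section
/- For all u₀, u₁, u₂, u₃ ∈ ℝ⁸ one has Φ(u₀,u₁,u₂,u₃)² + 8·Σ_{μ=1}^{7} ( λ⁴(e^μ)(u₀,u₁,u₂,u₃) )² = ‖u₀♭∧u₁♭∧u₂♭∧u₃♭‖², i.e. |Φ(u₀,u₁,u₂,u₃)|² + 8|τ(u₀,u₁,u₂,u₃)|² = |u₀∧u₁∧u₂∧u₃|². -/
open scoped BigOperators

noncomputable section

namespace FMpaper

variable {K : Type*} [NormedField K] [NormedAlgebra ℝ K]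

/-- Coefficient model for the exterior algebra of `(ℝⁿ)*` with scalars in `K`:
a form is given by its coefficients on the basis `e^S`, `S ⊆ {0, …, n-1}` sorted. -/
abbrev Form (K : Type*) (n : ℕ) := Finset (Fin n) → K

variable {n : ℕ}

/-- Sign such that `e^s ∧ e^t = signMerge s t • e^(s ∪ t)` for disjoint sorted `s, t`. -/
def signMerge (s t : Finset (Fin n)) : K :=
  (-1 : K) ^ (((s ×ˢ t).filter (fun p => p.2 < p.1)).card)

/-- Wedge product. -/
def wedge (α β : Form K n) : Form K n :=
  fun u => ∑ s ∈ u.powerset, signMerge s (u \ s) * α s * β (u \ s)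

/-- Hodge star operator (for the standard inner product and orientation `e^{0⋯(n-1)}`). -/
def hstar (α : Form K n) : Form K n :=
  fun t => signMerge tᶜ t * α tᶜ

/-- Interior product with the basis vector `e_μ`. -/
def iprodB (μ : Fin n) (α : Form K n) : Form K n :=
  fun t => if μ ∈ t then 0
    else (-1 : K) ^ ((t.filter (fun j => j < μ)).card) * α (insert μ t)

/-- Interior product with the vector `v`. -/
def iprod (v : Fin n → K) (α : Form K n) : Form K n :=
  fun t => ∑ μ, v μ * iprodB μ α t

/-- The basis covector `e^i` as a 1-form. -/
def e1 (i : Fin n) : Form K n := fun s => if s = {i} then 1 else 0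

/-- The covector `v♭` dual to a vector `v`. -/
def flat (v : Fin n → K) : Form K n := ∑ i, v i • e1 i

/-- The vector `α♯` dual to a 1-form `α`. -/
def sharp1 (α : Form K n) : Fin n → K := fun i => α {i}

/-- The inner product of forms (extended `K`-bilinearly). -/
def inner' (α β : Form K n) : K := ∑ s, α s * β s

/-- The (Euclidean) norm of a form; for an `√-1 ℝ`-valued form `√-1 γ` this is `‖γ‖`. -/
def fnorm (α : Form K n) : ℝ := Real.sqrt (∑ s, ‖α s‖ ^ 2)

/-- `α` is homogeneous of degree `k`. -/
def isGrade (k : ℕ) (α : Form K n) : Prop := ∀ s, s.card ≠ k → α s = 0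

/-- Evaluation of a `k`-form on `k` vectors. -/
def evalForm {k : ℕ} (α : Form K n) (v : Fin k → (Fin n → K)) : K :=
  ∑ s : Finset (Fin n), α s *
    (if h : s.card = k then
      Matrix.det (Matrix.of fun i j => v i ((s.orderIsoOfFin h j : Fin n))) else 0)

/-- The matrix of the skew-symmetric endomorphism `γ♯` associated with a 2-form `γ`
via `⟨γ♯ u, v⟩ = γ(u, v)`. -/
def mat2 (γ : Form K n) : Matrix (Fin n) (Fin n) K :=
  Matrix.of fun i j => if i < j then γ {i, j} else if j < i then - γ {i, j} else 0

/-- The standard `G₂` 3-form `φ = e^{123}+e^{145}+e^{167}+e^{246}−e^{257}−e^{347}−e^{356}`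
on `ℝ⁷` (indices `1, …, 7` shifted to `0, …, 6`). -/
def phi7 : Form K 7 := fun s =>
  if s = ({0, 1, 2} : Finset (Fin 7)) then 1
  else if s = ({0, 3, 4} : Finset (Fin 7)) then 1
  else if s = ({0, 5, 6} : Finset (Fin 7)) then 1
  else if s = ({1, 3, 5} : Finset (Fin 7)) then 1
  else if s = ({1, 4, 6} : Finset (Fin 7)) then -1
  else if s = ({2, 3, 6} : Finset (Fin 7)) then -1
  else if s = ({2, 4, 5} : Finset (Fin 7)) then -1
  else 0

/-- `*₇φ = e^{4567}+e^{2367}+e^{2345}+e^{1357}−e^{1346}−e^{1256}−e^{1247}` on `ℝ⁷`. -/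
def psi7 : Form K 7 := fun s =>
  if s = ({3, 4, 5, 6} : Finset (Fin 7)) then 1
  else if s = ({1, 2, 5, 6} : Finset (Fin 7)) then 1
  else if s = ({1, 2, 3, 4} : Finset (Fin 7)) then 1
  else if s = ({0, 2, 4, 6} : Finset (Fin 7)) then 1
  else if s = ({0, 2, 3, 5} : Finset (Fin 7)) then -1
  else if s = ({0, 1, 4, 5} : Finset (Fin 7)) then -1
  else if s = ({0, 1, 3, 6} : Finset (Fin 7)) then -1
  else 0

/-- The `G₂` 3-form `φ` on `V = span{e₁, …, e₇} ⊂ ℝ⁸`, regarded as a form on `ℝ⁸`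
annihilated by `i(e₀)` (indices `1, …, 7` of `ℝ⁸`). -/
def phi8 : Form K 8 := fun s =>
  if s = ({1, 2, 3} : Finset (Fin 8)) then 1
  else if s = ({1, 4, 5} : Finset (Fin 8)) then 1
  else if s = ({1, 6, 7} : Finset (Fin 8)) then 1
  else if s = ({2, 4, 6} : Finset (Fin 8)) then 1
  else if s = ({2, 5, 7} : Finset (Fin 8)) then -1
  else if s = ({3, 4, 7} : Finset (Fin 8)) then -1
  else if s = ({3, 5, 6} : Finset (Fin 8)) then -1
  else 0

/-- `*₇φ` on `V ⊂ ℝ⁸`, regarded as a 4-form on `ℝ⁸` annihilated by `i(e₀)`. -/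
def psi8 : Form K 8 := fun s =>
  if s = ({4, 5, 6, 7} : Finset (Fin 8)) then 1
  else if s = ({2, 3, 6, 7} : Finset (Fin 8)) then 1
  else if s = ({2, 3, 4, 5} : Finset (Fin 8)) then 1
  else if s = ({1, 3, 5, 7} : Finset (Fin 8)) then 1
  else if s = ({1, 3, 4, 6} : Finset (Fin 8)) then -1
  else if s = ({1, 2, 5, 6} : Finset (Fin 8)) then -1
  else if s = ({1, 2, 4, 7} : Finset (Fin 8)) then -1
  else 0

/-- The standard Cayley 4-form `Φ = e⁰ ∧ φ + *₇φ` on `ℝ⁸`. -/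
def Phi8 : Form K 8 := wedge (e1 0) phi8 + psi8

/-- The index set of `V = span{e₁, …, e₇} ⊂ ℝ⁸`. -/
def Vset : Finset (Fin 8) := {1, 2, 3, 4, 5, 6, 7}

/-- The Hodge star `*₇` of `V ⊂ ℝ⁸` (volume form `e^{1⋯7}`), acting on forms on `ℝ⁸`
annihilated by `i(e₀)`. -/
def star7 (α : Form K 8) : Form K 8 :=
  fun t => if (0 : Fin 8) ∈ t then 0 else signMerge (Vset \ t) t * α (Vset \ t)

/-- `α` is (the pullback of) a form on `V`, i.e. `i(e₀) α = 0`. -/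
def onV (α : Form K 8) : Prop := ∀ s, (0 : Fin 8) ∈ s → α s = 0

/-- `λ²(α) = ½ (e⁰ ∧ α + i(α♯) φ)` for `α ∈ V*`. -/
def lambda2 (α : Form K 8) : Form K 8 :=
  (2 : K)⁻¹ • (wedge (e1 0) α + iprod (sharp1 α) phi8)

/-- `λ⁴(α) = (1/√8) (e⁰ ∧ i(α♯) *₇φ − α ∧ φ)` for `α ∈ V*`. -/
def lambda4 (α : Form K 8) : Form K 8 :=
  (algebraMap ℝ K (Real.sqrt 8))⁻¹ • (wedge (e1 0) (iprod (sharp1 α) psi8) - wedge α phi8)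

/-- `λ⁶(α) = *₈ λ²(α)` for `α ∈ V*`. -/
def lambda6 (α : Form K 8) : Form K 8 := hstar (lambda2 α)

/-- The projection `π²₇(α) = (α + *₈(Φ ∧ α))/4` onto `Λ²₇`. -/
def pi27 (α : Form K 8) : Form K 8 := (4 : K)⁻¹ • (α + hstar (wedge Phi8 α))

/-- The projection `π⁴₇(β) = Σ_{μ=1}^{7} ⟨β, λ⁴(e^μ)⟩ λ⁴(e^μ)` onto `Λ⁴₇`. -/
def pi47 (β : Form K 8) : Form K 8 :=
  ∑ μ : Fin 7, inner' β (lambda4 (e1 μ.succ)) • lambda4 (e1 μ.succ)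

/-- `τ(u₀,u₁,u₂,u₃) = Σ_{μ=1}^{7} λ⁴(e^μ)(u₀,u₁,u₂,u₃) ⬝ λ⁴(e^μ) = π⁴₇(u₀♭∧u₁♭∧u₂♭∧u₃♭)`. -/
def tau4 (u : Fin 4 → (Fin 8 → K)) : Form K 8 :=
  ∑ μ : Fin 7, evalForm (lambda4 (e1 μ.succ)) u • lambda4 (e1 μ.succ)

/-- Partial derivative `∂f^a/∂x^j` at `x`. -/
def pd {m p : ℕ} (f : (Fin m → ℝ) → (Fin p → ℝ)) (x : Fin m → ℝ) (j : Fin m) (a : Fin p) : ℝ :=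
  fderiv ℝ f x (Pi.single j 1) a


/-! ### Plücker coordinates -/

/-- The `4 × 4` minor of `u` with columns `a, b, c, d`. -/
def D (u : Fin 4 → (Fin 8 → ℝ)) (a b c d : Fin 8) : ℝ :=
  Matrix.det (Matrix.of fun i j => u i ((![a, b, c, d] : Fin 4 → Fin 8) j))

/-- Explicit `2 × 2` minors. -/
lemma D_eq (u : Fin 4 → (Fin 8 → ℝ)) (a b c d : Fin 8) : D u a b c d =
    (u 0 a * u 1 b - u 0 b * u 1 a) * (u 2 c * u 3 d - u 2 d * u 3 c)
    - (u 0 a * u 1 c - u 0 c * u 1 a) * (u 2 b * u 3 d - u 2 d * u 3 b)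
    + (u 0 a * u 1 d - u 0 d * u 1 a) * (u 2 b * u 3 c - u 2 c * u 3 b)
    + (u 0 b * u 1 c - u 0 c * u 1 b) * (u 2 a * u 3 d - u 2 d * u 3 a)
    - (u 0 b * u 1 d - u 0 d * u 1 b) * (u 2 a * u 3 c - u 2 c * u 3 a)
    + (u 0 c * u 1 d - u 0 d * u 1 c) * (u 2 a * u 3 b - u 2 b * u 3 a) := by
  unfold D
  rw [Matrix.det_succ_row_zero]
  simp [Fin.sum_univ_succ, Matrix.det_fin_three, Fin.succAbove, Matrix.submatrix]
  ring

lemma D_swap1 (u : Fin 4 → (Fin 8 → ℝ)) {a b : Fin 8} (c d : Fin 8) (_h : b < a) :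
    D u a b c d = - D u b a c d := by
  rw [D_eq, D_eq]; ring

lemma D_swap2 (u : Fin 4 → (Fin 8 → ℝ)) (a : Fin 8) {b c : Fin 8} (d : Fin 8) (_h : c < b) :
    D u a b c d = - D u a c b d := by
  rw [D_eq, D_eq]; ring

lemma D_swap3 (u : Fin 4 → (Fin 8 → ℝ)) (a b : Fin 8) {c d : Fin 8} (_h : d < c) :
    D u a b c d = - D u a b d c := by
  rw [D_eq, D_eq]; ring

lemma D_same1 (u : Fin 4 → (Fin 8 → ℝ)) (a c d : Fin 8) : D u a a c d = 0 := by
  rw [D_eq]; ring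

lemma D_same2 (u : Fin 4 → (Fin 8 → ℝ)) (a b d : Fin 8) : D u a b b d = 0 := by
  rw [D_eq]; ring

lemma D_same3 (u : Fin 4 → (Fin 8 → ℝ)) (a b c : Fin 8) : D u a b c c = 0 := by
  rw [D_eq]; ring

set_option maxHeartbeats 2000000 in
/-- The three-term Plücker relation. -/
lemma plA (u : Fin 4 → (Fin 8 → ℝ)) (i j a b c d : Fin 8) :
    D u i j a b * D u i j c d - D u i j a c * D u i j b d + D u i j a d * D u i j b c = 0 := by
  simp only [D_eq]; ring

set_option maxHeartbeats 2000000 in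
/-- The exchange relation. -/
lemma plB (u : Fin 4 → (Fin 8 → ℝ)) (a b c d e f g h : Fin 8) :
    D u a b c d * D u e f g h - D u e b c d * D u a f g h - D u f b c d * D u e a g h
      - D u g b c d * D u e f a h - D u h b c d * D u e f g a = 0 := by
  simp only [D_eq]; ring

/-! ### Evaluation of forms -/

/-- Basis form. -/
def eB (s : Finset (Fin 8)) : Form ℝ 8 := fun t => if t = s then 1 else 0

/-- The minor of `u` attached to `s`. -/
def minor (u : Fin 4 → (Fin 8 → ℝ)) (s : Finset (Fin 8)) : ℝ :=
  if h : s.card = 4 then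
      Matrix.det (Matrix.of fun i j => u i ((s.orderIsoOfFin h j : Fin 8))) else 0

lemma evalForm_eq (α : Form ℝ 8) (u : Fin 4 → (Fin 8 → ℝ)) :
    evalForm α u = ∑ s, α s * minor u s := rfl

lemma evalForm_add (α β : Form ℝ 8) (u : Fin 4 → (Fin 8 → ℝ)) :
    evalForm (α + β) u = evalForm α u + evalForm β u := by
  simp [evalForm_eq, add_mul, Finset.sum_add_distrib]

lemma evalForm_sub (α β : Form ℝ 8) (u : Fin 4 → (Fin 8 → ℝ)) :
    evalForm (α - β) u = evalForm α u - evalForm β u := by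
  simp [evalForm_eq, sub_mul, Finset.sum_sub_distrib]

lemma evalForm_smul (c : ℝ) (α : Form ℝ 8) (u : Fin 4 → (Fin 8 → ℝ)) :
    evalForm (c • α) u = c * evalForm α u := by
  simp [evalForm_eq, Finset.mul_sum, mul_assoc]

lemma evalForm_eB (s : Finset (Fin 8)) (u : Fin 4 → (Fin 8 → ℝ)) :
    evalForm (eB s) u = minor u s := by
  simp [evalForm_eq, eB]

lemma minor_eq (u : Fin 4 → (Fin 8 → ℝ)) {a b c d : Fin 8} (h1 : a < b) (h2 : b < c) (h3 : c < d) :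
    minor u {a, b, c, d} = D u a b c d := by
  have hm : StrictMono (![a, b, c, d] : Fin 4 → Fin 8) := by
    rw [Fin.strictMono_iff_lt_succ]
    intro i
    fin_cases i
    · exact h1
    · exact h2
    · exact h3
  have hc : ({a, b, c, d} : Finset (Fin 8)).card = 4 := by
    rw [Finset.card_insert_of_notMem, Finset.card_insert_of_notMem, Finset.card_pair h3.ne] <;>
      simp <;> grind
  have hu := Finset.orderEmbOfFin_unique hc (f := ![a, b, c, d])
    (by intro i; fin_cases i <;> simp) hm
  unfold minor D
  rw [dif_pos hc]
  congr 2
  ext i j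
  rw [Finset.coe_orderIsoOfFin_apply, ← hu]

lemma wedge_add' (α β γ : Form ℝ 8) : wedge α (β + γ) = wedge α β + wedge α γ := by
  ext s; simp [wedge, mul_add, Finset.sum_add_distrib]

lemma wedge_sub' (α β γ : Form ℝ 8) : wedge α (β - γ) = wedge α β - wedge α γ := by
  ext s; simp [wedge, mul_sub, Finset.sum_sub_distrib]

lemma wedge_zero' (α : Form ℝ 8) : wedge α 0 = 0 := by
  ext s; simp [wedge]

lemma wedge_neg' (α β : Form ℝ 8) : wedge α (-β) = -wedge α β := by
  ext s; simp [wedge]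

lemma evalForm_neg (α : Form ℝ 8) (u : Fin 4 → (Fin 8 → ℝ)) :
    evalForm (-α) u = -evalForm α u := by
  simp [evalForm_eq]

lemma evalForm_zero (u : Fin 4 → (Fin 8 → ℝ)) : evalForm 0 u = 0 := by
  simp [evalForm_eq]

lemma signMerge_singleton (i : Fin 8) (t : Finset (Fin 8)) :
    (signMerge {i} t : ℝ) = (-1) ^ (t.filter (fun j => j < i)).card := by
  unfold signMerge
  congr 1
  rw [Finset.singleton_product, Finset.filter_map, Finset.card_map]
  rfl

lemma wedge_e1 (i : Fin 8) (β : Form ℝ 8) (s : Finset (Fin 8)) :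
    wedge (e1 i) β s = if i ∈ s then
      (-1) ^ ((s.erase i).filter (fun j => j < i)).card * β (s.erase i) else 0 := by
  unfold wedge e1
  split_ifs with h
  · rw [Finset.sum_eq_single {i}]
    · simp [signMerge_singleton, Finset.sdiff_singleton_eq_erase]
    · intro b _ hb; simp [hb]
    · intro hn; exact absurd (by simpa using h) hn
  · apply Finset.sum_eq_zero
    intro b hb
    rw [if_neg]
    · simp
    · rintro rfl
      exact h (by simpa using hb)

lemma wedge_e1_eB (i : Fin 8) (s : Finset (Fin 8)) :
    wedge (e1 i) (eB s) = if i ∈ s then 0 else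
      ((-1 : ℝ) ^ (s.filter (fun j => j < i)).card) • eB (insert i s) := by
  ext t
  rw [wedge_e1]
  split_ifs with h1 h2 h2
  · have : t.erase i ≠ s := by rintro rfl; simp at h2
    simp [eB, this]
  · by_cases h : t = insert i s
    · subst h; simp [eB, Finset.erase_insert h2]
    · have : t.erase i ≠ s := by rintro rfl; exact h (Finset.insert_erase h1).symm
      simp [eB, h, this]
  · rfl
  · have : t ≠ insert i s := by rintro rfl; simp at h1
    simp [eB, this]

lemma eval_wedge (u : Fin 4 → (Fin 8 → ℝ)) (i : Fin 8) {a b c : Fin 8} (h1 : a < b) (h2 : b < c) :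
    evalForm (wedge (e1 i) (eB {a, b, c})) u = D u i a b c := by
  rw [wedge_e1_eB]
  by_cases ha : i = a
  · subst ha; simp [evalForm_zero, D_same1]
  by_cases hb : i = b
  · subst hb; rw [D_swap1 _ _ _ h1]; simp [evalForm_zero, D_same2]
  by_cases hc : i = c
  · subst hc; rw [D_swap1 _ _ _ (h1.trans h2), D_swap2 _ _ _ h2]; simp [evalForm_zero, D_same3]
  rw [if_neg (by simp [ha, hb, hc]), evalForm_smul, evalForm_eB]
  rcases lt_or_gt_of_ne ha with ha | ha
  · rw [minor_eq u ha h1 h2, Finset.filter_eq_empty_iff.2]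
    · simp
    · simp; grind
  rcases lt_or_gt_of_ne hb with hb | hb
  · have e : ({a, b, c} : Finset (Fin 8)).filter (fun j => j < i) = {a} := by
      ext x; simp; grind
    rw [Finset.insert_comm i a, minor_eq u ha hb h2, e, D_swap1 _ _ _ ha]
    simp
  rcases lt_or_gt_of_ne hc with hc | hc
  · have e : ({a, b, c} : Finset (Fin 8)).filter (fun j => j < i) = {a, b} := by
      ext x; simp; grind
    rw [Finset.insert_comm i a, Finset.insert_comm i b, minor_eq u h1 hb hc, e, D_swap1 _ _ _ ha,
      D_swap2 _ _ _ hb, Finset.card_pair h1.ne]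
    simp
  · have e : ({a, b, c} : Finset (Fin 8)).filter (fun j => j < i) = {a, b, c} := by
      ext x; simp; grind
    have e2 : (insert i {a, b, c} : Finset (Fin 8)) = {a, b, c, i} := by
      ext x; simp; grind
    have e3 : ({a, b, c} : Finset (Fin 8)).card = 3 := by
      rw [Finset.card_eq_three]
      exact ⟨a, b, c, h1.ne, (h1.trans h2).ne, h2.ne, rfl⟩
    rw [e, e2, e3, minor_eq u h1 h2 hc, D_swap1 _ _ _ ha, D_swap2 _ _ _ hb, D_swap3 _ _ _ hc]
    ring

lemma iprod_sharp (μ : Fin 8) (α : Form ℝ 8) : iprod (sharp1 (e1 μ)) α = iprodB μ α := by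
  ext t
  simp [iprod, sharp1, e1]

lemma iprodB_add (μ : Fin 8) (α β : Form ℝ 8) : iprodB μ (α + β) = iprodB μ α + iprodB μ β := by
  ext t
  simp only [iprodB, Pi.add_apply]
  split_ifs <;> ring

lemma iprodB_sub (μ : Fin 8) (α β : Form ℝ 8) : iprodB μ (α - β) = iprodB μ α - iprodB μ β := by
  ext t
  simp only [iprodB, Pi.sub_apply]
  split_ifs <;> ring

lemma iprodB_eB (μ : Fin 8) (s : Finset (Fin 8)) :
    iprodB μ (eB s) = if μ ∈ s then
      ((-1 : ℝ) ^ ((s.erase μ).filter (fun j => j < μ)).card) • eB (s.erase μ) else 0 := by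
  ext t
  unfold iprodB
  split_ifs with h1 h2 h2
  · have : t ≠ s.erase μ := by rintro rfl; simp at h1
    simp [eB, this]
  · rfl
  · by_cases h : t = s.erase μ
    · subst h; simp [eB, Finset.insert_erase h2]
    · have : insert μ t ≠ s := by rintro rfl; exact h (Finset.erase_insert h1).symm
      simp [eB, h, this]
  · have : insert μ t ≠ s := by rintro rfl; simp at h2
    simp [eB, this]

lemma iprodB_not (μ a b c d : Fin 8) (h : μ ∉ ({a, b, c, d} : Finset (Fin 8))) :
    iprodB μ (eB {a, b, c, d}) = 0 := by
  rw [iprodB_eB, if_neg h]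

lemma iprodB_1 {a b c d : Fin 8} (h1 : a < b) (h2 : b < c) (h3 : c < d) :
    iprodB a (eB {a, b, c, d}) = eB {b, c, d} := by
  have e : ({a, b, c, d} : Finset (Fin 8)).erase a = {b, c, d} := by ext x; simp; grind
  have e' : ({b, c, d} : Finset (Fin 8)).filter (fun j => j < a) = ∅ := by ext x; simp; grind
  rw [iprodB_eB, if_pos (by simp), e, e']
  simp

lemma iprodB_2 {a b c d : Fin 8} (h1 : a < b) (h2 : b < c) (h3 : c < d) :
    iprodB b (eB {a, b, c, d}) = -eB {a, c, d} := by
  have e : ({a, b, c, d} : Finset (Fin 8)).erase b = {a, c, d} := by ext x; simp; grind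
  have e' : ({a, c, d} : Finset (Fin 8)).filter (fun j => j < b) = {a} := by ext x; simp; grind
  rw [iprodB_eB, if_pos (by simp), e, e']
  simp

lemma iprodB_3 {a b c d : Fin 8} (h1 : a < b) (h2 : b < c) (h3 : c < d) :
    iprodB c (eB {a, b, c, d}) = eB {a, b, d} := by
  have e : ({a, b, c, d} : Finset (Fin 8)).erase c = {a, b, d} := by ext x; simp; grind
  have e' : ({a, b, d} : Finset (Fin 8)).filter (fun j => j < c) = {a, b} := by ext x; simp; grind
  rw [iprodB_eB, if_pos (by simp), e, e', Finset.card_pair h1.ne]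
  simp

lemma iprodB_4 {a b c d : Fin 8} (h1 : a < b) (h2 : b < c) (h3 : c < d) :
    iprodB d (eB {a, b, c, d}) = -eB {a, b, c} := by
  have e : ({a, b, c, d} : Finset (Fin 8)).erase d = {a, b, c} := by ext x; simp; grind
  have e' : ({a, b, c} : Finset (Fin 8)).filter (fun j => j < d) = {a, b, c} := by
    ext x; simp; grind
  have e3 : ({a, b, c} : Finset (Fin 8)).card = 3 := by
    rw [Finset.card_eq_three]
    exact ⟨a, b, c, h1.ne, (h1.trans h2).ne, h2.ne, rfl⟩
  rw [iprodB_eB, if_pos (by simp), e, e', e3]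
  ext t
  simp [pow_succ]

lemma phi8_eq : (phi8 : Form ℝ 8) = eB {1, 2, 3} + eB {1, 4, 5} + eB {1, 6, 7} + eB {2, 4, 6}
    - eB {2, 5, 7} - eB {3, 4, 7} - eB {3, 5, 6} := by
  ext s
  simp only [phi8, eB, Pi.add_apply, Pi.sub_apply]
  by_cases h0 : s = {1, 2, 3}
  · subst h0; simp +decide
  by_cases h1 : s = {1, 4, 5}
  · subst h1; simp +decide
  by_cases h2 : s = {1, 6, 7}
  · subst h2; simp +decide
  by_cases h3 : s = {2, 4, 6}
  · subst h3; simp +decide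
  by_cases h4 : s = {2, 5, 7}
  · subst h4; simp +decide
  by_cases h5 : s = {3, 4, 7}
  · subst h5; simp +decide
  by_cases h6 : s = {3, 5, 6}
  · subst h6; simp +decide
  simp [h0, h1, h2, h3, h4, h5, h6]

lemma psi8_eq : (psi8 : Form ℝ 8) = eB {4, 5, 6, 7} + eB {2, 3, 6, 7} + eB {2, 3, 4, 5}
    + eB {1, 3, 5, 7} - eB {1, 3, 4, 6} - eB {1, 2, 5, 6} - eB {1, 2, 4, 7} := by
  ext s
  simp only [psi8, eB, Pi.add_apply, Pi.sub_apply]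
  by_cases h0 : s = {4, 5, 6, 7}
  · subst h0; simp +decide
  by_cases h1 : s = {2, 3, 6, 7}
  · subst h1; simp +decide
  by_cases h2 : s = {2, 3, 4, 5}
  · subst h2; simp +decide
  by_cases h3 : s = {1, 3, 5, 7}
  · subst h3; simp +decide
  by_cases h4 : s = {1, 3, 4, 6}
  · subst h4; simp +decide
  by_cases h5 : s = {1, 2, 5, 6}
  · subst h5; simp +decide
  by_cases h6 : s = {1, 2, 4, 7}
  · subst h6; simp +decide
  simp [h0, h1, h2, h3, h4, h5, h6]

set_option linter.unusedSimpArgs false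

lemma evalPhi (u : Fin 4 → (Fin 8 → ℝ)) : evalForm Phi8 u = 
    D u 0 1 2 3 + D u 0 1 4 5 + D u 0 1 6 7 + D u 0 2 4 6 - D u 0 2 5 7 - D u 0 3 4 7 - D u 0 3 5 6 - D u 1 2 4 7 - D u 1 2 5 6 - D u 1 3 4 6 + D u 1 3 5 7 + D u 2 3 4 5 + D u 2 3 6 7 + D u 4 5 6 7 := by
  simp (disch := decide) only [Phi8, phi8_eq, psi8_eq, wedge_add', wedge_sub', evalForm_add,
    evalForm_sub, eval_wedge, evalForm_eB, minor_eq]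
  ring

/-- `√8 λ⁴(e^μ)` -/
lemma evalLam (u : Fin 4 → (Fin 8 → ℝ)) (μ : Fin 8) :
    8 * evalForm (lambda4 (e1 μ)) u ^ 2 =
      evalForm (wedge (e1 0) (iprodB μ psi8) - wedge (e1 μ) phi8) u ^ 2 := by
  rw [lambda4, evalForm_smul, iprod_sharp, mul_pow, ← mul_assoc]
  simp

lemma evalLam1 (u : Fin 4 → (Fin 8 → ℝ)) : 8 * evalForm (lambda4 (e1 1)) u ^ 2 =
    (-D u 0 2 4 7 - D u 0 2 5 6 - D u 0 3 4 6 + D u 0 3 5 7 - D u 1 2 4 6 + D u 1 2 5 7 + D u 1 3 4 7 + D u 1 3 5 6) ^ 2 := by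
  rw [evalLam]
  congr 1
  simp (disch := decide) only [phi8_eq, psi8_eq, iprodB_add, iprodB_sub, iprodB_not, iprodB_1,
    iprodB_2, iprodB_3, iprodB_4, wedge_add', wedge_sub', wedge_neg', wedge_zero', evalForm_add,
    evalForm_sub, evalForm_neg, evalForm_zero, eval_wedge, D_swap1, D_swap2, D_swap3, D_same1,
    D_same2, D_same3, evalForm_eB]
  ring

lemma evalLam2 (u : Fin 4 → (Fin 8 → ℝ)) : 8 * evalForm (lambda4 (e1 2)) u ^ 2 =
    (D u 0 1 4 7 + D u 0 1 5 6 + D u 0 3 4 5 + D u 0 3 6 7 + D u 1 2 4 5 + D u 1 2 6 7 + D u 2 3 4 7 + D u 2 3 5 6) ^ 2 := by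
  rw [evalLam]
  congr 1
  simp (disch := decide) only [phi8_eq, psi8_eq, iprodB_add, iprodB_sub, iprodB_not, iprodB_1,
    iprodB_2, iprodB_3, iprodB_4, wedge_add', wedge_sub', wedge_neg', wedge_zero', evalForm_add,
    evalForm_sub, evalForm_neg, evalForm_zero, eval_wedge, D_swap1, D_swap2, D_swap3, D_same1,
    D_same2, D_same3, evalForm_eB]
  ring

lemma evalLam3 (u : Fin 4 → (Fin 8 → ℝ)) : 8 * evalForm (lambda4 (e1 3)) u ^ 2 =
    (D u 0 1 4 6 - D u 0 1 5 7 - D u 0 2 4 5 - D u 0 2 6 7 + D u 1 3 4 5 + D u 1 3 6 7 + D u 2 3 4 6 - D u 2 3 5 7) ^ 2 := by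
  rw [evalLam]
  congr 1
  simp (disch := decide) only [phi8_eq, psi8_eq, iprodB_add, iprodB_sub, iprodB_not, iprodB_1,
    iprodB_2, iprodB_3, iprodB_4, wedge_add', wedge_sub', wedge_neg', wedge_zero', evalForm_add,
    evalForm_sub, evalForm_neg, evalForm_zero, eval_wedge, D_swap1, D_swap2, D_swap3, D_same1,
    D_same2, D_same3, evalForm_eB]
  ring

lemma evalLam4 (u : Fin 4 → (Fin 8 → ℝ)) : 8 * evalForm (lambda4 (e1 4)) u ^ 2 =
    (-D u 0 1 2 7 - D u 0 1 3 6 + D u 0 2 3 5 + D u 0 5 6 7 + D u 1 2 3 4 + D u 1 4 6 7 - D u 2 4 5 7 - D u 3 4 5 6) ^ 2 := by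
  rw [evalLam]
  congr 1
  simp (disch := decide) only [phi8_eq, psi8_eq, iprodB_add, iprodB_sub, iprodB_not, iprodB_1,
    iprodB_2, iprodB_3, iprodB_4, wedge_add', wedge_sub', wedge_neg', wedge_zero', evalForm_add,
    evalForm_sub, evalForm_neg, evalForm_zero, eval_wedge, D_swap1, D_swap2, D_swap3, D_same1,
    D_same2, D_same3, evalForm_eB]
  ring

lemma evalLam5 (u : Fin 4 → (Fin 8 → ℝ)) : 8 * evalForm (lambda4 (e1 5)) u ^ 2 =
    (-D u 0 1 2 6 + D u 0 1 3 7 - D u 0 2 3 4 - D u 0 4 6 7 + D u 1 2 3 5 + D u 1 5 6 7 - D u 2 4 5 6 + D u 3 4 5 7) ^ 2 := by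
  rw [evalLam]
  congr 1
  simp (disch := decide) only [phi8_eq, psi8_eq, iprodB_add, iprodB_sub, iprodB_not, iprodB_1,
    iprodB_2, iprodB_3, iprodB_4, wedge_add', wedge_sub', wedge_neg', wedge_zero', evalForm_add,
    evalForm_sub, evalForm_neg, evalForm_zero, eval_wedge, D_swap1, D_swap2, D_swap3, D_same1,
    D_same2, D_same3, evalForm_eB]
  ring

lemma evalLam6 (u : Fin 4 → (Fin 8 → ℝ)) : 8 * evalForm (lambda4 (e1 6)) u ^ 2 =
    (D u 0 1 2 5 + D u 0 1 3 4 + D u 0 2 3 7 + D u 0 4 5 7 + D u 1 2 3 6 + D u 1 4 5 6 + D u 2 5 6 7 + D u 3 4 6 7) ^ 2 := by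
  rw [evalLam]
  congr 1
  simp (disch := decide) only [phi8_eq, psi8_eq, iprodB_add, iprodB_sub, iprodB_not, iprodB_1,
    iprodB_2, iprodB_3, iprodB_4, wedge_add', wedge_sub', wedge_neg', wedge_zero', evalForm_add,
    evalForm_sub, evalForm_neg, evalForm_zero, eval_wedge, D_swap1, D_swap2, D_swap3, D_same1,
    D_same2, D_same3, evalForm_eB]
  ring

lemma evalLam7 (u : Fin 4 → (Fin 8 → ℝ)) : 8 * evalForm (lambda4 (e1 7)) u ^ 2 =
    (D u 0 1 2 4 - D u 0 1 3 5 - D u 0 2 3 6 - D u 0 4 5 6 + D u 1 2 3 7 + D u 1 4 5 7 + D u 2 4 6 7 - D u 3 5 6 7) ^ 2 := by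
  rw [evalLam]
  congr 1
  simp (disch := decide) only [phi8_eq, psi8_eq, iprodB_add, iprodB_sub, iprodB_not, iprodB_1,
    iprodB_2, iprodB_3, iprodB_4, wedge_add', wedge_sub', wedge_neg', wedge_zero', evalForm_add,
    evalForm_sub, evalForm_neg, evalForm_zero, eval_wedge, D_swap1, D_swap2, D_swap3, D_same1,
    D_same2, D_same3, evalForm_eB]
  ring

/-- The increasing quadruples in `{0, …, 7}`. -/
def L4 : List (Fin 8 × Fin 8 × Fin 8 × Fin 8) :=
  [(0, 1, 2, 3), (0, 1, 2, 4), (0, 1, 2, 5), (0, 1, 2, 6), (0, 1, 2, 7), (0, 1, 3, 4), (0, 1, 3, 5), (0, 1, 3, 6), (0, 1, 3, 7), (0, 1, 4, 5), (0, 1, 4, 6), (0, 1, 4, 7), (0, 1, 5, 6), (0, 1, 5, 7), (0, 1, 6, 7), (0, 2, 3, 4), (0, 2, 3, 5), (0, 2, 3, 6), (0, 2, 3, 7), (0, 2, 4, 5), (0, 2, 4, 6), (0, 2, 4, 7), (0, 2, 5, 6), (0, 2, 5, 7), (0, 2, 6, 7), (0, 3, 4, 5), (0, 3, 4, 6), (0,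 3, 4, 7), (0, 3, 5, 6), (0, 3, 5, 7), (0, 3, 6, 7), (0, 4, 5, 6), (0, 4, 5, 7), (0, 4, 6, 7), (0, 5, 6, 7), (1, 2, 3, 4), (1, 2, 3, 5), (1, 2, 3, 6), (1, 2, 3, 7), (1, 2, 4, 5), (1, 2, 4, 6), (1, 2, 4, 7), (1, 2, 5, 6), (1, 2, 5, 7), (1, 2, 6, 7), (1, 3, 4, 5), (1, 3, 4, 6), (1, 3, 4, 7), (1, 3, 5, 6), (1, 3, 5, 7), (1, 3, 6, 7), (1, 4, 5, 6), (1, 4, 5, 7), (1, 4, 6, 7), (1, 5, 6, 7), (2, 3, 4, 5), (2, 3, 4, 6), (2, 3, 4, 7), (2, 3, 5, 6), (2, 3, 5, 7), (2, 3, 6, 7), (2, 4, 5, 6), (2, 4, 5, 7), (2, 4, 6, 7), (2, 5, 6, 7), (3, 4, 5, 6), (3, 4, 5, 7), (3, 4, 6, 7), (3, 5, 6, 7), (4, 5, 6, 7)]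

set_option maxHeartbeats 4000000 in
/-- The Cayley equality in Plücker coordinates. -/
lemma key (u : Fin 4 → (Fin 8 → ℝ)) :
    (D u 0 1 2 3 + D u 0 1 4 5 + D u 0 1 6 7 + D u 0 2 4 6 - D u 0 2 5 7 - D u 0 3 4 7 - D u 0 3 5 6 - D u 1 2 4 7 - D u 1 2 5 6 - D u 1 3 4 6 + D u 1 3 5 7 + D u 2 3 4 5 + D u 2 3 6 7 + D u 4 5 6 7) ^ 2 +
    (-D u 0 2 4 7 - D u 0 2 5 6 - D u 0 3 4 6 + D u 0 3 5 7 - D u 1 2 4 6 + D u 1 2 5 7 + D u 1 3 4 7 + D u 1 3 5 6) ^ 2 +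
    (D u 0 1 4 7 + D u 0 1 5 6 + D u 0 3 4 5 + D u 0 3 6 7 + D u 1 2 4 5 + D u 1 2 6 7 + D u 2 3 4 7 + D u 2 3 5 6) ^ 2 +
    (D u 0 1 4 6 - D u 0 1 5 7 - D u 0 2 4 5 - D u 0 2 6 7 + D u 1 3 4 5 + D u 1 3 6 7 + D u 2 3 4 6 - D u 2 3 5 7) ^ 2 +
    (-D u 0 1 2 7 - D u 0 1 3 6 + D u 0 2 3 5 + D u 0 5 6 7 + D u 1 2 3 4 + D u 1 4 6 7 - D u 2 4 5 7 - D u 3 4 5 6) ^ 2 +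
    (-D u 0 1 2 6 + D u 0 1 3 7 - D u 0 2 3 4 - D u 0 4 6 7 + D u 1 2 3 5 + D u 1 5 6 7 - D u 2 4 5 6 + D u 3 4 5 7) ^ 2 +
    (D u 0 1 2 5 + D u 0 1 3 4 + D u 0 2 3 7 + D u 0 4 5 7 + D u 1 2 3 6 + D u 1 4 5 6 + D u 2 5 6 7 + D u 3 4 6 7) ^ 2 +
    (D u 0 1 2 4 - D u 0 1 3 5 - D u 0 2 3 6 - D u 0 4 5 6 + D u 1 2 3 7 + D u 1 4 5 7 + D u 2 4 6 7 - D u 3 5 6 7) ^ 2 =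
    (L4.map fun t => D u t.1 t.2.1 t.2.2.1 t.2.2.2 ^ 2).sum := by
  simp only [L4, List.map_cons, List.map_nil, List.sum_cons, List.sum_nil]
  have h0_0 := plA u 0 1 2 3 4 5
  have h0_1 := plA u 0 1 2 3 6 7
  have h0_2 := plA u 0 1 4 5 6 7
  have h0_3 := plA u 0 2 1 3 4 6
  have h0_4 := plA u 0 2 1 3 5 7
  have h0_5 := plA u 0 2 4 5 6 7
  have h1_0 := plA u 0 3 1 2 4 7
  have h1_1 := plA u 0 3 1 2 5 6
  have h1_2 := plA u 0 3 4 5 6 7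
  have h1_3 := plA u 0 4 1 2 5 6
  have h1_4 := plA u 0 4 1 3 5 7
  have h1_5 := plA u 0 4 2 3 6 7
  have h2_0 := plA u 0 5 1 2 4 7
  have h2_1 := plA u 0 5 1 3 4 6
  have h2_2 := plA u 0 5 2 3 6 7
  have h2_3 := plA u 0 6 1 2 4 7
  have h2_4 := plA u 0 6 1 3 5 7
  have h2_5 := plA u 0 6 2 3 4 5
  have h3_0 := plA u 0 7 1 2 5 6
  have h3_1 := plA u 0 7 1 3 4 6
  have h3_2 := plA u 0 7 2 3 4 5
  have h3_3 := plA u 1 2 0 3 4 7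
  have h3_4 := plA u 1 2 0 3 5 6
  have h3_5 := plA u 1 2 4 5 6 7
  have h4_0 := plA u 1 3 0 2 4 6
  have h4_1 := plA u 1 3 0 2 5 7
  have h4_2 := plA u 1 3 4 5 6 7
  have h4_3 := plA u 1 4 0 2 5 7
  have h4_4 := plA u 1 4 0 3 5 6
  have h4_5 := plA u 1 4 2 3 6 7
  have h5_0 := plA u 1 5 0 2 4 6
  have h5_1 := plA u 1 5 0 3 4 7
  have h5_2 := plA u 1 5 2 3 6 7
  have h5_3 := plA u 1 6 0 2 5 7
  have h5_4 := plA u 1 6 0 3 4 7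
  have h5_5 := plA u 1 6 2 3 4 5
  have h6_0 := plA u 1 7 0 2 4 6
  have h6_1 := plA u 1 7 0 3 5 6
  have h6_2 := plA u 1 7 2 3 4 5
  have h6_3 := plA u 2 3 0 1 4 5
  have h6_4 := plA u 2 3 0 1 6 7
  have h6_5 := plA u 2 3 4 5 6 7
  have h7_0 := plA u 2 4 0 1 6 7
  have h7_1 := plA u 2 4 0 3 5 6
  have h7_2 := plA u 2 4 1 3 5 7
  have h7_3 := plA u 2 5 0 1 6 7
  have h7_4 := plA u 2 5 0 3 4 7
  have h7_5 := plA u 2 5 1 3 4 6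
  have h8_0 := plA u 2 6 0 1 4 5
  have h8_1 := plA u 2 6 0 3 4 7
  have h8_2 := plA u 2 6 1 3 5 7
  have h8_3 := plA u 2 7 0 1 4 5
  have h8_4 := plA u 2 7 0 3 5 6
  have h8_5 := plA u 2 7 1 3 4 6
  have h9_0 := plA u 3 4 0 1 6 7
  have h9_1 := plA u 3 4 0 2 5 7
  have h9_2 := plA u 3 4 1 2 5 6
  have h9_3 := plA u 3 5 0 1 6 7
  have h9_4 := plA u 3 5 0 2 4 6
  have h9_5 := plA u 3 5 1 2 4 7
  have h10_0 := plA u 3 6 0 1 4 5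
  have h10_1 := plA u 3 6 0 2 5 7
  have h10_2 := plA u 3 6 1 2 4 7
  have h10_3 := plA u 3 7 0 1 4 5
  have h10_4 := plA u 3 7 0 2 4 6
  have h10_5 := plA u 3 7 1 2 5 6
  have h11_0 := plA u 4 5 0 1 2 3
  have h11_1 := plA u 4 5 0 1 6 7
  have h11_2 := plA u 4 5 2 3 6 7
  have h11_3 := plA u 4 6 0 1 2 3
  have h11_4 := plA u 4 6 0 2 5 7
  have h11_5 := plA u 4 6 1 3 5 7
  have h12_0 := plA u 4 7 0 1 2 3
  have h12_1 := plA u 4 7 0 3 5 6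
  have h12_2 := plA u 4 7 1 2 5 6
  have h12_3 := plA u 5 6 0 1 2 3
  have h12_4 := plA u 5 6 0 3 4 7
  have h12_5 := plA u 5 6 1 2 4 7
  have h13_0 := plA u 5 7 0 1 2 3
  have h13_1 := plA u 5 7 0 2 4 6
  have h13_2 := plA u 5 7 1 3 4 6
  have h13_3 := plA u 6 7 0 1 2 3
  have h13_4 := plA u 6 7 0 1 4 5
  have h13_5 := plA u 6 7 2 3 4 5
  have h14_0 := plB u 7 2 3 6 0 1 4 5
  have h14_1 := plB u 4 2 5 6 0 1 3 7
  have h14_2 := plB u 2 0 4 6 1 3 5 7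
  have h14_3 := plB u 6 2 3 4 0 1 5 7
  have h14_4 := plB u 3 0 1 7 2 4 5 6
  have h14_5 := plB u 2 0 3 5 1 4 6 7
  have h15_0 := plB u 3 0 1 2 4 5 6 7
  have h15_1 := plB u 6 2 4 5 0 1 3 7
  have h15_2 := plB u 4 0 2 7 1 3 5 6
  simp (disch := decide) only [D_swap1, D_swap2, D_swap3] at h0_0 h0_1 h0_2 h0_3 h0_4 h0_5 h1_0 h1_1 h1_2 h1_3 h1_4 h1_5 h2_0 h2_1 h2_2 h2_3 h2_4 h2_5 h3_0 h3_1 h3_2 h3_3 h3_4 h3_5 h4_0 h4_1 h4_2 h4_3 h4_4 h4_5 h5_0 h5_1 h5_2 h5_3 h5_4 h5_5 h6_0 h6_1 h6_2 h6_3 h6_4 h6_5 h7_0 h7_1 h7_2 h7_3 h7_4 h7_5 h8_0 h8_1 h8_2 h8_3 h8_4 h8_5 h9_0 h9_1 h9_2 h9_3 h9_4 h9_5 h10_0 h10_1 h10_2 h10_3 h10_4 h10_5 h11_0 h11_1 h11_2 h11_3 h11_4 h11_5 h12_0 h12_1 h12_2 h12_3 h12_4 h12_5 h13_0 h13_1 h13_2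 h13_3 h13_4 h13_5 h14_0 h14_1 h14_2 h14_3 h14_4 h14_5 h15_0 h15_1 h15_2
  linear_combination 2 * (h0_0 + h0_1 + h0_2 - h0_3 + h0_4 + h0_5 - h1_0 - h1_1 + h1_2 - h1_3 + h1_4 + h1_5 - h2_0 - h2_1 + h2_2 - h2_3 + h2_4 + h2_5 - h3_0 - h3_1 + h3_2 - h3_3 - h3_4 + h3_5 + h4_0 - h4_1 + h4_2 - h4_3 - h4_4 + h4_5 + h5_0 - h5_1 + h5_2 - h5_3 - h5_4 + h5_5 + h6_0 - h6_1 + h6_2 + h6_3 + h6_4 + h6_5 + h7_0 - h7_1 + h7_2 + h7_3 - h7_4 - h7_5 + h8_0 - h8_1 + h8_2 + h8_3 - h8_4 - h8_5 + h9_0 - h9_1 - h9_2 + h9_3 + h9_4 - h9_5 + h10_0 - h10_1 - h10_2 + h10_3 + h10_4 - h10_5 + h11_0 + h11_1 + h11_2 + h11_3 - h11_4 + h11_5 + h12_0 - h12_1 - h12_2 + h12_3 - h12_4 - h12_5 + h13_0 + h13_1 - h13_2 + h13_3 + h13_4 + h13_5 - h14_0 + h14_1 - h14_2 + h14_3 +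 h14_4 - h14_5 - h15_0 + h15_1 - h15_2)

/-! ### The norm of the wedge product -/

lemma flat_apply (v : Fin 8 → ℝ) (s : Finset (Fin 8)) :
    flat v s = ∑ i, v i * (e1 i : Form ℝ 8) s := by
  simp [flat, Finset.sum_apply]

lemma flat_single (v : Fin 8 → ℝ) (a : Fin 8) : flat v {a} = v a := by
  simp [flat_apply, e1]

lemma wedge_flat (v : Fin 8 → ℝ) (β : Form ℝ 8) (s : Finset (Fin 8)) :
    wedge (flat v) β s =
      ∑ i ∈ s, v i * ((-1) ^ ((s.erase i).filter (fun j => j < i)).card * β (s.erase i)) := by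
  have h : wedge (flat v) β s = ∑ i, v i * wedge (e1 i) β s := by
    simp only [wedge, flat_apply, Finset.mul_sum, Finset.sum_mul]
    rw [Finset.sum_comm]
    refine Finset.sum_congr rfl fun i _ => Finset.sum_congr rfl fun t _ => ?_
    ring
  rw [h]
  simp only [wedge_e1, mul_ite, mul_zero]
  rw [← Finset.sum_filter]
  simp

lemma grade_flat (v : Fin 8 → ℝ) : isGrade 1 (flat v) := by
  intro s hs
  rw [flat_apply]
  refine Finset.sum_eq_zero fun i _ => ?_
  have : s ≠ {i} := by rintro rfl; simp at hs
  simp [e1, this]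

lemma grade_wedge (v : Fin 8 → ℝ) (β : Form ℝ 8) (k : ℕ) (h : isGrade k β) :
    isGrade (k + 1) (wedge (flat v) β) := by
  intro s hs
  rw [wedge_flat]
  refine Finset.sum_eq_zero fun i hi => ?_
  rw [h (s.erase i)]
  · simp
  · rw [Finset.card_erase_of_mem hi]
    have := Finset.card_pos.2 ⟨i, hi⟩
    omega

lemma wf2 (v : Fin 8 → ℝ) (β : Form ℝ 8) {a b : Fin 8} (h1 : a < b) :
    wedge (flat v) β {a, b} = v a * β {b} - v b * β {a} := by
  have ea : ({a, b} : Finset (Fin 8)).erase a = {b} := by ext x; simp; grind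
  have eb : ({a, b} : Finset (Fin 8)).erase b = {a} := by ext x; simp; grind
  have fa : ({b} : Finset (Fin 8)).filter (fun j => j < a) = ∅ := by ext x; simp; grind
  have fb : ({a} : Finset (Fin 8)).filter (fun j => j < b) = {a} := by ext x; simp; grind
  rw [wedge_flat, Finset.sum_pair h1.ne, ea, eb, fa, fb]
  simp
  ring

lemma wf3 (v : Fin 8 → ℝ) (β : Form ℝ 8) {a b c : Fin 8} (h1 : a < b) (h2 : b < c) :
    wedge (flat v) β {a, b, c} = v a * β {b, c} - v b * β {a, c} + v c * β {a, b} := by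
  have ea : ({a, b, c} : Finset (Fin 8)).erase a = {b, c} := by ext x; simp; grind
  have eb : ({a, b, c} : Finset (Fin 8)).erase b = {a, c} := by ext x; simp; grind
  have ec : ({a, b, c} : Finset (Fin 8)).erase c = {a, b} := by ext x; simp; grind
  have fa : ({b, c} : Finset (Fin 8)).filter (fun j => j < a) = ∅ := by ext x; simp; grind
  have fb : ({a, c} : Finset (Fin 8)).filter (fun j => j < b) = {a} := by ext x; simp; grind
  have fc : ({a, b} : Finset (Fin 8)).filter (fun j => j < c) = {a, b} := by ext x; simp; grind
  rw [wedge_flat, Finset.sum_insert (by simp; grind), Finset.sum_pair h2.ne, ea, eb, ec, fa, fb, fc,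
    Finset.card_pair h1.ne]
  simp
  ring

lemma wf4 (v : Fin 8 → ℝ) (β : Form ℝ 8) {a b c d : Fin 8} (h1 : a < b) (h2 : b < c) (h3 : c < d) :
    wedge (flat v) β {a, b, c, d} =
      v a * β {b, c, d} - v b * β {a, c, d} + v c * β {a, b, d} - v d * β {a, b, c} := by
  have ea : ({a, b, c, d} : Finset (Fin 8)).erase a = {b, c, d} := by ext x; simp; grind
  have eb : ({a, b, c, d} : Finset (Fin 8)).erase b = {a, c, d} := by ext x; simp; grind
  have ec : ({a, b, c, d} : Finset (Fin 8)).erase c = {a, b, d} := by ext x; simp; grind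
  have ed : ({a, b, c, d} : Finset (Fin 8)).erase d = {a, b, c} := by ext x; simp; grind
  have fa : ({b, c, d} : Finset (Fin 8)).filter (fun j => j < a) = ∅ := by ext x; simp; grind
  have fb : ({a, c, d} : Finset (Fin 8)).filter (fun j => j < b) = {a} := by ext x; simp; grind
  have fc : ({a, b, d} : Finset (Fin 8)).filter (fun j => j < c) = {a, b} := by ext x; simp; grind
  have fd : ({a, b, c} : Finset (Fin 8)).filter (fun j => j < d) = {a, b, c} := by
    ext x; simp; grind
  have e3 : ({a, b, c} : Finset (Fin 8)).card = 3 := by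
    rw [Finset.card_eq_three]
    exact ⟨a, b, c, h1.ne, (h1.trans h2).ne, h2.ne, rfl⟩
  rw [wedge_flat, Finset.sum_insert (by simp; grind), Finset.sum_insert (by simp; grind),
    Finset.sum_pair h3.ne, ea, eb, ec, ed, fa, fb, fc, fd, e3, Finset.card_pair h1.ne]
  simp
  ring

/-- `u₀♭ ∧ u₁♭ ∧ u₂♭ ∧ u₃♭` -/
abbrev W (u : Fin 4 → (Fin 8 → ℝ)) : Form ℝ 8 :=
  wedge (flat (u 0)) (wedge (flat (u 1)) (wedge (flat (u 2)) (flat (u 3))))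

lemma W_apply (u : Fin 4 → (Fin 8 → ℝ)) {a b c d : Fin 8} (h1 : a < b) (h2 : b < c) (h3 : c < d) :
    W u {a, b, c, d} = D u a b c d := by
  have h4 := h1.trans h2
  have h5 := h2.trans h3
  have h6 := h4.trans h3
  unfold W
  rw [wf4 _ _ h1 h2 h3, wf3 _ _ h2 h3, wf3 _ _ h4 h3, wf3 _ _ h1 h5, wf3 _ _ h1 h2,
    wf2 _ _ h1, wf2 _ _ h2, wf2 _ _ h3, wf2 _ _ h4, wf2 _ _ h5, wf2 _ _ h6, D_eq]
  simp only [flat_single]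
  ring

/-- The set of a quadruple. -/
abbrev toS (t : Fin 8 × Fin 8 × Fin 8 × Fin 8) : Finset (Fin 8) := {t.1, t.2.1, t.2.2.1, t.2.2.2}

lemma L4_lt : ∀ t ∈ L4, t.1 < t.2.1 ∧ t.2.1 < t.2.2.1 ∧ t.2.2.1 < t.2.2.2 := by
  have h : (L4.all fun t => decide (t.1 < t.2.1 ∧ t.2.1 < t.2.2.1 ∧ t.2.2.1 < t.2.2.2)) = true := by
    decide +kernel
  intro t ht
  exact of_decide_eq_true (List.all_eq_true.1 h t ht)

lemma L4_nodup : (L4.map toS).Nodup := by decide +kernel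

lemma L4_set : (L4.map toS).toFinset = Finset.powersetCard 4 Finset.univ := by
  apply Finset.eq_of_subset_of_card_le
  · intro s hs
    rw [List.mem_toFinset, List.mem_map] at hs
    obtain ⟨t, ht, rfl⟩ := hs
    obtain ⟨h1, h2, h3⟩ := L4_lt t ht
    rw [Finset.mem_powersetCard]
    refine ⟨Finset.subset_univ _, ?_⟩
    rw [Finset.card_insert_of_notMem, Finset.card_insert_of_notMem, Finset.card_pair h3.ne] <;>
      simp <;> grind
  · rw [List.toFinset_card_of_nodup L4_nodup, List.length_map, Finset.card_powersetCard]
    decide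

lemma norm_W (u : Fin 4 → (Fin 8 → ℝ)) :
    fnorm (W u) ^ 2 = (L4.map fun t => D u t.1 t.2.1 t.2.2.1 t.2.2.2 ^ 2).sum := by
  unfold fnorm
  rw [Real.sq_sqrt (by positivity)]
  have hg : isGrade 4 (W u) := grade_wedge _ _ 3 (grade_wedge _ _ 2 (grade_wedge _ _ 1 (grade_flat _)))
  have h1 : ∑ s, ‖W u s‖ ^ 2 = ∑ s ∈ (L4.map toS).toFinset, W u s ^ 2 := by
    rw [L4_set]
    symm
    simp only [Real.norm_eq_abs, sq_abs]
    apply Finset.sum_subset (Finset.subset_univ _)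
    intro s _ hs
    rw [hg s (by simpa [Finset.mem_powersetCard] using hs)]
    simp
  rw [h1, List.sum_toFinset _ L4_nodup, List.map_map]
  congr 1
  apply List.map_congr_left
  intro t ht
  obtain ⟨a, b, c⟩ := L4_lt t ht
  simp only [Function.comp]
  rw [W_apply u a b c]

/-- Lemma 3.5, the Cayley equality.  For all `u₀,u₁,u₂,u₃ ∈ ℝ⁸`:
`|Φ(u₀,u₁,u₂,u₃)|² + 8 |τ(u₀,u₁,u₂,u₃)|² = |u₀♭ ∧ u₁♭ ∧ u₂♭ ∧ u₃♭|²`. -/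
theorem statement5 (u : Fin 4 → (Fin 8 → ℝ)) :
    (evalForm Phi8 u) ^ 2 +
      8 * ∑ μ : Fin 7, (evalForm (lambda4 (e1 μ.succ)) u) ^ 2 =
    (fnorm (wedge (flat (u 0)) (wedge (flat (u 1)) (wedge (flat (u 2)) (flat (u 3)))))) ^ 2 := by
  rw [show fnorm (wedge (flat (u 0)) (wedge (flat (u 1)) (wedge (flat (u 2)) (flat (u 3)))))
    = fnorm (W u) from rfl, norm_W, ← key, evalPhi, Finset.mul_sum]
  simp only [Fin.sum_univ_succ, Fin.sum_univ_zero, Finset.univ_eq_empty, Finset.sum_empty]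
  rw [← evalLam1 u, ← evalLam2 u, ← evalLam3 u, ← evalLam4 u, ← evalLam5 u, ← evalLam6 u,
    ← evalLam7 u]
  simp only [← add_assoc, add_zero]
  rfl

end FMpaper
end
end

section
/- Let B ⊂ ℝ³ be open and f = (f⁴,…,f⁷): B → ℝ⁴ smooth, with graph tangent vectors v_j(x) and Fourier–Mukai curvature F_∇^S as in the context. Then the following are equivalent: (1) *₇φ(v₁(x),v₂(x),v₃(x),·) = 0 for every x ∈ B (i.e., the graph S is an associative submanifold with an appropriate orientation); (2) (F_∇^S)³/6 + F_∇^S ∧ *₇φ = 0 at every point of B; (3) (F_∇^S)³/6 + F_∇^S ∧ *₇φ = 0 and φ ∧ *₇((F_∇^S)²) = 0 at every point of B. -/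
open scoped BigOperators

noncomputable section

namespace FMpaper

variable {K : Type*} [NormedField K] [NormedAlgebra ℝ K]

variable {n : ℕ}

/-! Graph setting for coassociative `T⁴`-fibrations: `ℝ⁷ = ℝ³ × ℝ⁴` with coordinates
`(x¹,x²,x³,y⁴,…,y⁷)`. -/

/-- The index of the coordinate `x^j` (`j = 1,2,3` shifted to `0,1,2`) in `ℝ⁷`. -/
def xj (j : Fin 3) : Fin 7 := Fin.castAdd 4 j

/-- The index of the coordinate `y^a` (`a = 4,…,7` shifted to `0,…,3`) in `ℝ⁷`. -/
def ya (a : Fin 4) : Fin 7 := a.addNat 3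

/-- The spanning tangent vectors `v_j = ∂_j + Σ_a (∂f^a/∂x^j) ∂_a` of the graph of `f`. -/
def vA (f : (Fin 3 → ℝ) → (Fin 4 → ℝ)) (x : Fin 3 → ℝ) (j : Fin 3) : Fin 7 → ℝ :=
  Pi.single (xj j) 1 + ∑ a : Fin 4, pd f x j a • (Pi.single (ya a) 1 : Fin 7 → ℝ)

/-- The real 2-form `γ` with `F_∇^S = √-1 γ`, i.e. `γ = Σ_{j,a} (∂f^a/∂x^j) dx^j ∧ dy^a`. -/
def gammaA (f : (Fin 3 → ℝ) → (Fin 4 → ℝ)) (x : Fin 3 → ℝ) : Form ℝ 7 :=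
  ∑ j : Fin 3, ∑ a : Fin 4, pd f x j a • wedge (e1 (xj j)) (e1 (ya a))

/-- The `√-1 ℝ`-valued curvature 2-form
`F_∇^S = √-1 Σ_{j,a} (∂f^a/∂x^j) dx^j ∧ dy^a` of the real Fourier–Mukai transform. -/
def FSA (f : (Fin 3 → ℝ) → (Fin 4 → ℝ)) (x : Fin 3 → ℝ) : Form ℂ 7 :=
  fun s => Complex.I * (gammaA f x s : ℂ)

theorem h_wedge_e1 (i k : Fin 7) (h : i < k) (u : Finset (Fin 7)) :
    wedge (e1 i : Form ℝ 7) (e1 k) u = if u = {i, k} then 1 else 0 := by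
  unfold wedge e1
  split_ifs with hu
  · subst hu
    have hik : i ≠ k := ne_of_lt h
    rw [Finset.sum_eq_single {i}]
    · have h1 : ({i, k} : Finset (Fin 7)) \ {i} = {k} := by
        ext x; simp only [Finset.mem_sdiff, Finset.mem_insert, Finset.mem_singleton]; grind
      have h2 : ¬ k < i := not_lt.mpr h.le
      rw [h1]
      simp [signMerge, Finset.filter_singleton, h2]
    · intro b _ hb
      simp [hb]
    · simp
  · apply Finset.sum_eq_zero
    intro s hs
    rw [Finset.mem_powerset] at hs
    by_cases h1 : s = {i}
    · by_cases h2 : u \ s = {k}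
      · exfalso; apply hu
        rw [← Finset.union_sdiff_of_subset hs, h2, h1]; rfl
      · simp [h2]
    · simp [h1]

theorem h_F (f : (Fin 3 → ℝ) → (Fin 4 → ℝ)) (x : Fin 3 → ℝ) (s : Finset (Fin 7)) :
    FSA f x s = ∑ j : Fin 3, ∑ a : Fin 4,
      Complex.I * (pd f x j a : ℂ) * (if s = {xj j, ya a} then 1 else 0) := by
  have hlt : ∀ (j : Fin 3) (a : Fin 4), xj j < ya a := by decide
  unfold FSA gammaA
  simp only [Finset.sum_apply, Pi.smul_apply, h_wedge_e1 _ _ (hlt _ _), smul_eq_mul,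
    Complex.ofReal_sum, Finset.mul_sum, Complex.ofReal_mul, mul_assoc]
  refine Finset.sum_congr rfl fun j _ => Finset.sum_congr rfl fun a _ => ?_
  split_ifs <;> simp

theorem h_wF (f : (Fin 3 → ℝ) → (Fin 4 → ℝ)) (x : Fin 3 → ℝ) (β : Form ℂ 7)
    (u : Finset (Fin 7)) :
    wedge (FSA f x) β u = ∑ j : Fin 3, ∑ a : Fin 4, Complex.I * (pd f x j a : ℂ) *
      (if ({xj j, ya a} : Finset (Fin 7)) ⊆ u then
        signMerge {xj j, ya a} (u \ {xj j, ya a}) * β (u \ {xj j, ya a}) else 0) := by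
  unfold wedge
  simp only [h_F, Finset.mul_sum, Finset.sum_mul]
  rw [Finset.sum_comm]
  refine Finset.sum_congr rfl fun j _ => ?_
  rw [Finset.sum_comm]
  refine Finset.sum_congr rfl fun a _ => ?_
  split_ifs with h
  · rw [Finset.sum_eq_single {xj j, ya a}]
    · simp; ring
    · intro b _ hb; simp [hb]
    · intro hh; exact absurd (Finset.mem_powerset.mpr h) hh
  · rw [mul_zero]
    apply Finset.sum_eq_zero
    intro s hs
    have : s ≠ {xj j, ya a} := by
      rintro rfl; exact h (Finset.mem_powerset.mp hs)
    simp [this]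

/-- horizontal degree -/
def hdX (s : Finset (Fin 7)) : ℕ := (s ∩ {0, 1, 2}).card
/-- vertical degree -/
def hdY (s : Finset (Fin 7)) : ℕ := (s ∩ {3, 4, 5, 6}).card

theorem h_dX {s u : Finset (Fin 7)} (h : s ⊆ u) : hdX u = hdX s + hdX (u \ s) := by
  revert s u; unfold hdX
  intro s u h
  rw [← Finset.card_union_of_disjoint, ← Finset.union_inter_distrib_right,
    Finset.union_sdiff_of_subset h]
  exact Finset.disjoint_of_subset_left Finset.inter_subset_left
    (Finset.disjoint_of_subset_right Finset.inter_subset_left Finset.disjoint_sdiff)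

theorem h_dY {s u : Finset (Fin 7)} (h : s ⊆ u) : hdY u = hdY s + hdY (u \ s) := by
  revert s u; unfold hdY
  intro s u h
  rw [← Finset.card_union_of_disjoint, ← Finset.union_inter_distrib_right,
    Finset.union_sdiff_of_subset h]
  exact Finset.disjoint_of_subset_left Finset.inter_subset_left
    (Finset.disjoint_of_subset_right Finset.inter_subset_left Finset.disjoint_sdiff)

theorem h_wne {α β : Form ℂ 7} {u : Finset (Fin 7)} (h : wedge α β u ≠ 0) :
    ∃ s, α s ≠ 0 ∧ ∃ t, β t ≠ 0 ∧ hdX u = hdX s + hdX t ∧ hdY u = hdY s + hdY t := by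
  obtain ⟨s, hs, hne⟩ := Finset.exists_ne_zero_of_sum_ne_zero h
  rw [Finset.mem_powerset] at hs
  exact ⟨s, fun h0 => hne (by simp [h0]), u \ s, fun h0 => hne (by simp [h0]), h_dX hs, h_dY hs⟩

theorem h_Fne {f : (Fin 3 → ℝ) → (Fin 4 → ℝ)} {x : Fin 3 → ℝ} {s : Finset (Fin 7)}
    (h : FSA f x s ≠ 0) : hdX s = 1 ∧ hdY s = 1 := by
  rw [h_F] at h
  obtain ⟨j, _, h⟩ := Finset.exists_ne_zero_of_sum_ne_zero h
  obtain ⟨a, _, h⟩ := Finset.exists_ne_zero_of_sum_ne_zero h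
  have : s = {xj j, ya a} := by
    by_contra h0; simp [h0] at h
  subst this
  have : ∀ (j : Fin 3) (a : Fin 4), hdX {xj j, ya a} = 1 ∧ hdY {xj j, ya a} = 1 := by decide
  exact this j a

theorem h_psine {s : Finset (Fin 7)} (h : (psi7 s : ℂ) ≠ 0) :
    (hdX s = 2 ∧ hdY s = 2) ∨ (hdX s = 0 ∧ hdY s = 4) := by
  unfold psi7 at h
  split_ifs at h <;> first | exact absurd rfl h | (subst s; decide)

theorem h_phine {s : Finset (Fin 7)} (h : (phi7 s : ℂ) ≠ 0) :
    (hdX s = 1 ∧ hdY s = 2) ∨ (hdX s = 3 ∧ hdY s = 0) := by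
  unfold phi7 at h
  split_ifs at h <;> first | exact absurd rfl h | (subst s; decide)

theorem h_33 (u : Finset (Fin 7)) (h : hdX u = 3 ∧ hdY u = 3) :
    u = {0, 1, 2, 4, 5, 6} ∨ u = {0, 1, 2, 3, 5, 6} ∨ u = {0, 1, 2, 3, 4, 6} ∨
      u = {0, 1, 2, 3, 4, 5} := by
  revert u; decide +kernel

theorem h_24 (u : Finset (Fin 7)) (h : hdX u = 2 ∧ hdY u = 4) :
    u = {1, 2, 3, 4, 5, 6} ∨ u = {0, 2, 3, 4, 5, 6} ∨ u = {0, 1, 3, 4, 5, 6} := by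
  revert u; decide +kernel

theorem h_le (u : Finset (Fin 7)) : hdX u ≤ 3 ∧ hdY u ≤ 4 := by
  revert u; decide +kernel

theorem h_compl (t : Finset (Fin 7)) : hdX tᶜ + hdX t = 3 ∧ hdY tᶜ + hdY t = 4 := by
  revert t; decide +kernel

/-- the wedge coefficients -/
theorem h_cond2 (f : (Fin 3 → ℝ) → (Fin 4 → ℝ)) (x : Fin 3 → ℝ) :
    ((6 : ℂ)⁻¹ • wedge (FSA f x) (wedge (FSA f x) (FSA f x)) + wedge (FSA f x) psi7 = 0) ↔
    ∀ u : Finset (Fin 7), (u = {0, 1, 2, 4, 5, 6} ∨ u = {0, 1, 2, 3, 5, 6} ∨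
        u = {0, 1, 2, 3, 4, 6} ∨ u = {0, 1, 2, 3, 4, 5}) →
      (6 : ℂ)⁻¹ * wedge (FSA f x) (wedge (FSA f x) (FSA f x)) u + wedge (FSA f x) psi7 u = 0 := by
  constructor
  · intro h u _
    exact congrFun h u
  · intro h
    funext u
    by_cases hu : hdX u = 3 ∧ hdY u = 3
    · exact h u (h_33 u hu)
    · have h1 : wedge (FSA f x) (wedge (FSA f x) (FSA f x)) u = 0 := by
        by_contra h0
        obtain ⟨s, hs, t, ht, hx, hy⟩ := h_wne h0
        obtain ⟨s', hs', t', ht', hx', hy'⟩ := h_wne ht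
        have := h_Fne hs; have := h_Fne hs'; have := h_Fne ht'
        omega
      have h2 : wedge (FSA f x) psi7 u = 0 := by
        by_contra h0
        obtain ⟨s, hs, t, ht, hx, hy⟩ := h_wne h0
        have := h_Fne hs; have := h_psine ht; have := h_le u
        omega
      simp [h1, h2]

theorem h_cond3 (f : (Fin 3 → ℝ) → (Fin 4 → ℝ)) (x : Fin 3 → ℝ)
    (h : ∀ u : Finset (Fin 7), (u = {1, 2, 3, 4, 5, 6} ∨ u = {0, 2, 3, 4, 5, 6} ∨
        u = {0, 1, 3, 4, 5, 6}) →
      wedge phi7 (hstar (wedge (FSA f x) (FSA f x))) u = 0) :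
    wedge phi7 (hstar (wedge (FSA f x) (FSA f x))) = 0 := by
  funext u
  by_cases hu : hdX u = 2 ∧ hdY u = 4
  · exact h u (h_24 u hu)
  · by_contra h0
    obtain ⟨s, hs, t, ht, hx, hy⟩ := h_wne h0
    have ht : wedge (FSA f x) (FSA f x) tᶜ ≠ 0 := by
      intro h1; apply ht; simp [hstar, h1]
    obtain ⟨s', hs', t', ht', hx', hy'⟩ := h_wne ht
    have := h_Fne hs'; have := h_Fne ht'; have := h_phine hs; have := h_le u
    have hX := (h_compl t).1
    have hY := (h_compl t).2
    omega

theorem h_wFS (f : (Fin 3 → ℝ) → (Fin 4 → ℝ)) (x : Fin 3 → ℝ) (β : Form ℂ 7)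
    (u : Finset (Fin 7)) (J : Finset (Fin 3)) (A : Finset (Fin 4))
    (h : ∀ j a, ({xj j, ya a} : Finset (Fin 7)) ⊆ u ↔ j ∈ J ∧ a ∈ A) :
    wedge (FSA f x) β u = ∑ j ∈ J, ∑ a ∈ A, Complex.I * (pd f x j a : ℂ) *
        (signMerge {xj j, ya a} (u \ {xj j, ya a}) * β (u \ {xj j, ya a})) := by
  rw [h_wF, ← Finset.sum_subset (Finset.subset_univ J)]
  · refine Finset.sum_congr rfl fun j hj => ?_
    rw [← Finset.sum_subset (Finset.subset_univ A)]
    · refine Finset.sum_congr rfl fun a ha => ?_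
      rw [if_pos ((h j a).2 ⟨hj, ha⟩)]
    · intro a _ ha
      rw [if_neg fun h' => ha ((h j a).1 h').2, mul_zero]
  · intro j _ hj
    apply Finset.sum_eq_zero
    intro a _
    rw [if_neg fun h' => hj ((h j a).1 h').1, mul_zero]

/-- parity exponent of the merge -/
def hsg (s t : Finset (Fin 7)) : Bool :=
  (((s ×ˢ t).filter (fun p => p.2 < p.1)).card) % 2 == 0

theorem h_pos {s t : Finset (Fin 7)} (h : hsg s t = true) : (signMerge s t : ℂ) = 1 := by
  unfold signMerge
  unfold hsg at h
  exact Even.neg_one_pow (Nat.even_iff.2 (by simpa using h))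

theorem h_neg {s t : Finset (Fin 7)} (h : hsg s t = false) : (signMerge s t : ℂ) = -1 := by
  unfold signMerge
  unfold hsg at h
  refine Odd.neg_one_pow (Nat.odd_iff.2 ?_)
  have : (((s ×ˢ t).filter (fun p => p.2 < p.1)).card) % 2 ≠ 0 := by simpa using h
  omega

theorem h_Fv (f : (Fin 3 → ℝ) → (Fin 4 → ℝ)) (x : Fin 3 → ℝ) (j : Fin 3) (a : Fin 4) :
    FSA f x {xj j, ya a} = Complex.I * pd f x j a := by
  have hinj : ∀ (j : Fin 3) (a : Fin 4) (j' : Fin 3) (a' : Fin 4),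
      ({xj j, ya a} : Finset (Fin 7)) = {xj j', ya a'} ↔ (j = j' ∧ a = a') := by decide +kernel
  rw [h_F]
  simp only [hinj]
  rw [Finset.sum_eq_single j, Finset.sum_eq_single a]
  · simp
  · intro b _ hb; simp [hb.symm]
  · simp
  · intro b _ hb; simp [hb.symm]
  · simp

theorem h_FF (f : (Fin 3 → ℝ) → (Fin 4 → ℝ)) (x : Fin 3 → ℝ) (j k : Fin 3) (a b : Fin 4)
    (hjk : j < k) (hab : a < b) :
    wedge (FSA f x) (FSA f x) {xj j, xj k, ya a, ya b} =
      2 * (pd f x j a * pd f x k b - pd f x j b * pd f x k a) := by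
  have h0 : ∀ (j k : Fin 3) (a b : Fin 4), ∀ i c,
    ({xj i, ya c} : Finset (Fin 7)) ⊆ {xj j, xj k, ya a, ya b} ↔
      i ∈ ({j, k} : Finset (Fin 3)) ∧ c ∈ ({a, b} : Finset (Fin 4)) := by decide +kernel
  have h1 : ∀ (j k : Fin 3) (a b : Fin 4), j < k → a < b →
    ({xj j, xj k, ya a, ya b} : Finset (Fin 7)) \ {xj j, ya a} = {xj k, ya b} ∧
    ({xj j, xj k, ya a, ya b} : Finset (Fin 7)) \ {xj j, ya b} = {xj k, ya a} ∧
    ({xj j, xj k, ya a, ya b} : Finset (Fin 7)) \ {xj k, ya a} = {xj j, ya b} ∧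
    ({xj j, xj k, ya a, ya b} : Finset (Fin 7)) \ {xj k, ya b} = {xj j, ya a} ∧
    hsg {xj j, ya a} {xj k, ya b} = false ∧ hsg {xj j, ya b} {xj k, ya a} = true ∧
    hsg {xj k, ya a} {xj j, ya b} = true ∧ hsg {xj k, ya b} {xj j, ya a} = false := by
    decide +kernel
  obtain ⟨e1, e2, e3, e4, s1, s2, s3, s4⟩ := h1 j k a b hjk hab
  rw [h_wFS f x _ _ {j, k} {a, b} (h0 j k a b)]
  simp only [Finset.sum_pair hjk.ne, Finset.sum_pair hab.ne, e1, e2, e3, e4, h_neg s1, h_pos s2,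
    h_pos s3, h_neg s4, h_Fv]
  linear_combination (-2 * (pd f x j a * pd f x k b - pd f x j b * pd f x k a) : ℂ) * Complex.I_sq

theorem h_w6 (f : (Fin 3 → ℝ) → (Fin 4 → ℝ)) (x : Fin 3 → ℝ) (β : Form ℂ 7) (a b c : Fin 4)
    (hab : a < b) (hbc : b < c) :
    wedge (FSA f x) β {xj 0, xj 1, xj 2, ya a, ya b, ya c} = Complex.I *
      (pd f x 0 a * β {xj 1, xj 2, ya b, ya c} - pd f x 0 b * β {xj 1, xj 2, ya a, ya c}
        + pd f x 0 c * β {xj 1, xj 2, ya a, ya b}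
      - pd f x 1 a * β {xj 0, xj 2, ya b, ya c} + pd f x 1 b * β {xj 0, xj 2, ya a, ya c}
        - pd f x 1 c * β {xj 0, xj 2, ya a, ya b}
      + pd f x 2 a * β {xj 0, xj 1, ya b, ya c} - pd f x 2 b * β {xj 0, xj 1, ya a, ya c}
        + pd f x 2 c * β {xj 0, xj 1, ya a, ya b}) := by
  have h0 : ∀ (a b c : Fin 4), ∀ i d,
    ({xj i, ya d} : Finset (Fin 7)) ⊆ {xj 0, xj 1, xj 2, ya a, ya b, ya c} ↔
      i ∈ (Finset.univ : Finset (Fin 3)) ∧ d ∈ ({a, b, c} : Finset (Fin 4)) := by decide +kernel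
  have h1 : ∀ (a b c : Fin 4), a < b → b < c →
    ∀ i j k : Fin 3, (i = 0 ∧ j = 1 ∧ k = 2 ∨ i = 1 ∧ j = 0 ∧ k = 2 ∨ i = 2 ∧ j = 0 ∧ k = 1) →
    ({xj 0, xj 1, xj 2, ya a, ya b, ya c} : Finset (Fin 7)) \ {xj i, ya a}
      = {xj j, xj k, ya b, ya c} ∧
    ({xj 0, xj 1, xj 2, ya a, ya b, ya c} : Finset (Fin 7)) \ {xj i, ya b}
      = {xj j, xj k, ya a, ya c} ∧
    ({xj 0, xj 1, xj 2, ya a, ya b, ya c} : Finset (Fin 7)) \ {xj i, ya c}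
      = {xj j, xj k, ya a, ya b} ∧
    hsg {xj i, ya a} {xj j, xj k, ya b, ya c} = (i != 1) ∧
    hsg {xj i, ya b} {xj j, xj k, ya a, ya c} = (i == 1) ∧
    hsg {xj i, ya c} {xj j, xj k, ya a, ya b} = (i != 1) := by
    decide +kernel
  have hac := hab.trans hbc
  obtain ⟨e1, e2, e3, s1, s2, s3⟩ := h1 a b c hab hbc 0 1 2 (by decide)
  obtain ⟨e4, e5, e6, s4, s5, s6⟩ := h1 a b c hab hbc 1 0 2 (by decide)
  obtain ⟨e7, e8, e9, s7, s8, s9⟩ := h1 a b c hab hbc 2 0 1 (by decide)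
  have n1 : a ∉ ({b, c} : Finset (Fin 4)) := by simp [hab.ne, hac.ne]
  rw [h_wFS f x _ _ Finset.univ {a, b, c} (h0 a b c)]
  simp only [Fin.sum_univ_three, Finset.sum_insert n1, Finset.sum_pair hbc.ne, e1, e2, e3, e4, e5,
    e6, e7, e8, e9, h_pos s1, h_neg s2, h_pos s3, h_neg s4, h_pos s5, h_neg s6, h_pos s7,
    h_neg s8, h_pos s9]
  ring

/-- 3x3 minor -/
def hdet (p : Fin 3 → Fin 4 → ℝ) (a b c : Fin 4) : ℝ :=
  p 0 a * (p 1 b * p 2 c - p 1 c * p 2 b) - p 0 b * (p 1 a * p 2 c - p 1 c * p 2 a)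
    + p 0 c * (p 1 a * p 2 b - p 1 b * p 2 a)

theorem h_F3 (f : (Fin 3 → ℝ) → (Fin 4 → ℝ)) (x : Fin 3 → ℝ) (a b c : Fin 4)
    (hab : a < b) (hbc : b < c) :
    (6 : ℂ)⁻¹ * wedge (FSA f x) (wedge (FSA f x) (FSA f x)) {xj 0, xj 1, xj 2, ya a, ya b, ya c}
      = Complex.I * hdet (pd f x) a b c := by
  have hac := hab.trans hbc
  rw [h_w6 f x _ a b c hab hbc]
  simp only [h_FF f x 0 1 _ _ (by decide) hab, h_FF f x 0 1 _ _ (by decide) hbc,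
    h_FF f x 0 1 _ _ (by decide) hac, h_FF f x 0 2 _ _ (by decide) hab,
    h_FF f x 0 2 _ _ (by decide) hbc,
    h_FF f x 0 2 _ _ (by decide) hac, h_FF f x 1 2 _ _ (by decide) hab,
    h_FF f x 1 2 _ _ (by decide) hbc,
    h_FF f x 1 2 _ _ (by decide) hac, hdet]
  push_cast
  ring

/-- the four associator equations -/
def hE (p : Fin 3 → Fin 4 → ℝ) : Fin 4 → ℝ :=
  ![p 0 1 + p 1 2 - p 2 3 + hdet p 1 2 3, p 0 0 + p 1 3 + p 2 2 + hdet p 0 2 3,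
    p 0 3 - p 1 0 + p 2 1 + hdet p 0 1 3, p 0 2 - p 1 1 - p 2 0 + hdet p 0 1 2]

theorem h_eq0 (f : (Fin 3 → ℝ) → (Fin 4 → ℝ)) (x : Fin 3 → ℝ) :
    (6 : ℂ)⁻¹ * wedge (FSA f x) (wedge (FSA f x) (FSA f x)) {0, 1, 2, 4, 5, 6}
      + wedge (FSA f x) psi7 {0, 1, 2, 4, 5, 6} = Complex.I * hE (pd f x) 0 := by
  have e : ({0, 1, 2, 4, 5, 6} : Finset (Fin 7)) = {xj 0, xj 1, xj 2, ya 1, ya 2, ya 3} := by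
    decide
  rw [e, h_F3 f x 1 2 3 (by decide) (by decide), h_w6 f x _ 1 2 3 (by decide) (by decide)]
  simp +decide [psi7, hE]
  ring

theorem h_eq1 (f : (Fin 3 → ℝ) → (Fin 4 → ℝ)) (x : Fin 3 → ℝ) :
    (6 : ℂ)⁻¹ * wedge (FSA f x) (wedge (FSA f x) (FSA f x)) {0, 1, 2, 3, 5, 6}
      + wedge (FSA f x) psi7 {0, 1, 2, 3, 5, 6} = Complex.I * hE (pd f x) 1 := by
  have e : ({0, 1, 2, 3, 5, 6} : Finset (Fin 7)) = {xj 0, xj 1, xj 2, ya 0, ya 2, ya 3} := by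
    decide
  rw [e, h_F3 f x 0 2 3 (by decide) (by decide), h_w6 f x _ 0 2 3 (by decide) (by decide)]
  simp +decide [psi7, hE]
  ring

theorem h_eq2 (f : (Fin 3 → ℝ) → (Fin 4 → ℝ)) (x : Fin 3 → ℝ) :
    (6 : ℂ)⁻¹ * wedge (FSA f x) (wedge (FSA f x) (FSA f x)) {0, 1, 2, 3, 4, 6}
      + wedge (FSA f x) psi7 {0, 1, 2, 3, 4, 6} = Complex.I * hE (pd f x) 2 := by
  have e : ({0, 1, 2, 3, 4, 6} : Finset (Fin 7)) = {xj 0, xj 1, xj 2, ya 0, ya 1, ya 3} := by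
    decide
  rw [e, h_F3 f x 0 1 3 (by decide) (by decide), h_w6 f x _ 0 1 3 (by decide) (by decide)]
  simp +decide [psi7, hE]
  ring

theorem h_eq3 (f : (Fin 3 → ℝ) → (Fin 4 → ℝ)) (x : Fin 3 → ℝ) :
    (6 : ℂ)⁻¹ * wedge (FSA f x) (wedge (FSA f x) (FSA f x)) {0, 1, 2, 3, 4, 5}
      + wedge (FSA f x) psi7 {0, 1, 2, 3, 4, 5} = Complex.I * hE (pd f x) 3 := by
  have e : ({0, 1, 2, 3, 4, 5} : Finset (Fin 7)) = {xj 0, xj 1, xj 2, ya 0, ya 1, ya 2} := by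
    decide
  rw [e, h_F3 f x 0 1 2 (by decide) (by decide), h_w6 f x _ 0 1 2 (by decide) (by decide)]
  simp +decide [psi7, hE]
  ring

theorem h_two (f : (Fin 3 → ℝ) → (Fin 4 → ℝ)) (x : Fin 3 → ℝ) :
    ((6 : ℂ)⁻¹ • wedge (FSA f x) (wedge (FSA f x) (FSA f x)) + wedge (FSA f x) psi7 = 0) ↔
    ∀ a, hE (pd f x) a = 0 := by
  rw [h_cond2]
  constructor
  · intro h a
    have key : ∀ r : ℝ, Complex.I * (r : ℂ) = 0 → r = 0 := by intro r hr; simpa using hr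
    apply key
    fin_cases a
    · exact (h_eq0 f x).symm.trans (h _ (by simp))
    · exact (h_eq1 f x).symm.trans (h _ (by simp))
    · exact (h_eq2 f x).symm.trans (h _ (by simp))
    · exact (h_eq3 f x).symm.trans (h _ (by simp))
  · rintro h u (rfl | rfl | rfl | rfl)
    · rw [h_eq0, h]; simp
    · rw [h_eq1, h]; simp
    · rw [h_eq2, h]; simp
    · rw [h_eq3, h]; simp

/-- a term of `φ ∧ *F²` -/
theorem h_termP (f : (Fin 3 → ℝ) → (Fin 4 → ℝ)) (x : Fin 3 → ℝ) (s t : Finset (Fin 7))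
    (j k : Fin 3) (a b : Fin 4) (hjk : j < k) (hab : a < b) (ht : tᶜ = {xj j, xj k, ya a, ya b})
    (h : hsg s t = hsg tᶜ t) :
    signMerge s t * phi7 s * hstar (wedge (FSA f x) (FSA f x)) t =
     phi7 s * (2 * (pd f x j a * pd f x k b - pd f x j b * pd f x k a)) := by
  unfold hstar
  rw [← h_FF f x j k a b hjk hab, ← ht]
  cases h2 : hsg tᶜ t
  · rw [h_neg h2, h_neg (h.trans h2)]; ring
  · rw [h_pos h2, h_pos (h.trans h2)]; ring

theorem h_termN (f : (Fin 3 → ℝ) → (Fin 4 → ℝ)) (x : Fin 3 → ℝ) (s t : Finset (Fin 7))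
    (j k : Fin 3) (a b : Fin 4) (hjk : j < k) (hab : a < b) (ht : tᶜ = {xj j, xj k, ya a, ya b})
    (h : hsg s t = !(hsg tᶜ t)) :
    signMerge s t * phi7 s * hstar (wedge (FSA f x) (FSA f x)) t =
     - phi7 s * (2 * (pd f x j a * pd f x k b - pd f x j b * pd f x k a)) := by
  unfold hstar
  rw [← h_FF f x j k a b hjk hab, ← ht]
  cases h2 : hsg tᶜ t
  · rw [h_neg h2, h_pos (by rw [h, h2]; rfl)]; ring
  · rw [h_pos h2, h_neg (by rw [h, h2]; rfl)]; ring

theorem h_phi_sum (β : Form ℂ 7) (u : Finset (Fin 7)) (L : Finset (Finset (Fin 7)))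
    (hL : L ⊆ u.powerset)
    (h : ∀ s, s ⊆ u → s ∈ ({{0, 1, 2}, {0, 3, 4}, {0, 5, 6}, {1, 3, 5}, {1, 4, 6}, {2, 3, 6},
      {2, 4, 5}} : Finset (Finset (Fin 7))) → s ∈ L) :
    wedge phi7 β u = ∑ s ∈ L, signMerge s (u \ s) * phi7 s * β (u \ s) := by
  unfold wedge
  refine (Finset.sum_subset hL ?_).symm
  intro s hs hsL
  have h0 : (phi7 s : ℂ) = 0 := by
    by_contra h0
    apply hsL
    apply h s (Finset.mem_powerset.1 hs)
    unfold phi7 at h0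
    split_ifs at h0 <;> first | exact absurd rfl h0 | (subst s; decide)
  simp [h0]
theorem h_sum4 (g : Finset (Fin 7) → ℂ) (s1 s2 s3 s4 : Finset (Fin 7))
    (h : s1 ∉ ({s2, s3, s4} : Finset (Finset (Fin 7))) ∧
      s2 ∉ ({s3, s4} : Finset (Finset (Fin 7))) ∧ s3 ≠ s4) :
    ∑ s ∈ ({s1, s2, s3, s4} : Finset (Finset (Fin 7))), g s = g s1 + (g s2 + (g s3 + g s4)) := by
  rw [Finset.sum_insert h.1, Finset.sum_insert h.2.1, Finset.sum_pair h.2.2]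

theorem h_q0 (f : (Fin 3 → ℝ) → (Fin 4 → ℝ)) (x : Fin 3 → ℝ) (h : ∀ a, hE (pd f x) a = 0) :
    wedge phi7 (hstar (wedge (FSA f x) (FSA f x))) {1, 2, 3, 4, 5, 6} = 0 := by
  rw [h_phi_sum _ _ {{1, 3, 5}, {1, 4, 6}, {2, 3, 6}, {2, 4, 5}} (by decide +kernel) (by decide +kernel),
    h_sum4 _ _ _ _ _ (by decide)]
  rw [h_termP f x {1, 3, 5} _ 0 1 0 2 (by decide) (by decide) (by decide +kernel)
    (by decide +kernel)]
  rw [h_termP f x {1, 4, 6} _ 0 1 1 3 (by decide) (by decide) (by decide +kernel)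
    (by decide +kernel)]
  rw [h_termP f x {2, 3, 6} _ 0 2 0 3 (by decide) (by decide) (by decide +kernel)
    (by decide +kernel)]
  rw [h_termP f x {2, 4, 5} _ 0 2 1 2 (by decide) (by decide) (by decide +kernel)
    (by decide +kernel)]
  have h0 := congrArg Complex.ofReal (h 0)
  have h1 := congrArg Complex.ofReal (h 1)
  have h2 := congrArg Complex.ofReal (h 2)
  have h3 := congrArg Complex.ofReal (h 3)
  simp [hE, hdet] at h0 h1 h2 h3
  simp +decide [phi7]
  linear_combination (-2) * (- (pd f x 0 0 : ℂ) * h0 + pd f x 0 1 * h1 - pd f x 0 2 * h2 + pd f x 0 3 * h3)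

theorem h_q1 (f : (Fin 3 → ℝ) → (Fin 4 → ℝ)) (x : Fin 3 → ℝ) (h : ∀ a, hE (pd f x) a = 0) :
    wedge phi7 (hstar (wedge (FSA f x) (FSA f x))) {0, 2, 3, 4, 5, 6} = 0 := by
  rw [h_phi_sum _ _ {{0, 3, 4}, {0, 5, 6}, {2, 3, 6}, {2, 4, 5}} (by decide +kernel) (by decide +kernel),
    h_sum4 _ _ _ _ _ (by decide)]
  rw [h_termP f x {0, 3, 4} _ 0 1 0 1 (by decide) (by decide) (by decide +kernel)
    (by decide +kernel)]
  rw [h_termP f x {0, 5, 6} _ 0 1 2 3 (by decide) (by decide) (by decide +kernel)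
    (by decide +kernel)]
  rw [h_termN f x {2, 3, 6} _ 1 2 0 3 (by decide) (by decide) (by decide +kernel)
    (by decide +kernel)]
  rw [h_termN f x {2, 4, 5} _ 1 2 1 2 (by decide) (by decide) (by decide +kernel)
    (by decide +kernel)]
  have h0 := congrArg Complex.ofReal (h 0)
  have h1 := congrArg Complex.ofReal (h 1)
  have h2 := congrArg Complex.ofReal (h 2)
  have h3 := congrArg Complex.ofReal (h 3)
  simp [hE, hdet] at h0 h1 h2 h3
  simp +decide [phi7]
  linear_combination (2) * (- (pd f x 1 0 : ℂ) * h0 + pd f x 1 1 * h1 - pd f x 1 2 * h2 + pd f x 1 3 * h3)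

theorem h_q2 (f : (Fin 3 → ℝ) → (Fin 4 → ℝ)) (x : Fin 3 → ℝ) (h : ∀ a, hE (pd f x) a = 0) :
    wedge phi7 (hstar (wedge (FSA f x) (FSA f x))) {0, 1, 3, 4, 5, 6} = 0 := by
  rw [h_phi_sum _ _ {{0, 3, 4}, {0, 5, 6}, {1, 3, 5}, {1, 4, 6}} (by decide +kernel) (by decide +kernel),
    h_sum4 _ _ _ _ _ (by decide)]
  rw [h_termN f x {0, 3, 4} _ 0 2 0 1 (by decide) (by decide) (by decide +kernel)
    (by decide +kernel)]
  rw [h_termN f x {0, 5, 6} _ 0 2 2 3 (by decide) (by decide) (by decide +kernel)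
    (by decide +kernel)]
  rw [h_termN f x {1, 3, 5} _ 1 2 0 2 (by decide) (by decide) (by decide +kernel)
    (by decide +kernel)]
  rw [h_termN f x {1, 4, 6} _ 1 2 1 3 (by decide) (by decide) (by decide +kernel)
    (by decide +kernel)]
  have h0 := congrArg Complex.ofReal (h 0)
  have h1 := congrArg Complex.ofReal (h 1)
  have h2 := congrArg Complex.ofReal (h 2)
  have h3 := congrArg Complex.ofReal (h 3)
  simp [hE, hdet] at h0 h1 h2 h3
  simp +decide [phi7]
  linear_combination (-2) * (- (pd f x 2 0 : ℂ) * h0 + pd f x 2 1 * h1 - pd f x 2 2 * h2 + pd f x 2 3 * h3)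

theorem h_three (f : (Fin 3 → ℝ) → (Fin 4 → ℝ)) (x : Fin 3 → ℝ) (h : ∀ a, hE (pd f x) a = 0) :
    wedge phi7 (hstar (wedge (FSA f x) (FSA f x))) = 0 := by
  apply h_cond3
  rintro u (rfl | rfl | rfl)
  · exact h_q0 f x h
  · exact h_q1 f x h
  · exact h_q2 f x h

theorem h_dets (v : Fin 4 → Fin 7 → ℝ) (s : Finset (Fin 7)) (g : Fin 4 → Fin 7)
    (hg : StrictMono g) (hs : ∀ i, g i ∈ s) (hc : s.card = 4) :
    (if h : s.card = 4 then
      Matrix.det (Matrix.of fun i j => v i ((s.orderIsoOfFin h j : Fin 7))) else 0) =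
    Matrix.det (Matrix.of fun i j => v i (g j)) := by
  rw [dif_pos hc, Finset.orderEmbOfFin_unique hc hs hg]
  rfl

theorem h_sm (a b c d : Fin 7) (h : a < b ∧ b < c ∧ c < d) : StrictMono ![a, b, c, d] := by
  rw [Fin.strictMono_iff_lt_succ]
  intro i
  fin_cases i
  · exact h.1
  · exact h.2.1
  · exact h.2.2

theorem h_det' (v : Fin 4 → Fin 7 → ℝ) (a b c d : Fin 7) (h : a < b ∧ b < c ∧ c < d) :
    (if h : ({a, b, c, d} : Finset (Fin 7)).card = 4 then
      Matrix.det (Matrix.of fun i j =>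
        v i ((({a, b, c, d} : Finset (Fin 7)).orderIsoOfFin h j : Fin 7))) else 0) =
    Matrix.det (Matrix.of fun i j => v i (![a, b, c, d] j)) := by
  apply h_dets v _ _ (h_sm a b c d h)
  · intro i; fin_cases i <;> simp
  · revert a b c d; decide +kernel

theorem h_eval_sum (v : Fin 4 → Fin 7 → ℝ) (D : Fin 7 → Fin 7 → Fin 7 → Fin 7 → ℝ)
    (hD : D = fun a b c d => Matrix.det (Matrix.of fun i j => v i (![a, b, c, d] j))) :
    evalForm psi7 v = D 3 4 5 6 + D 1 2 5 6 + D 1 2 3 4 + D 0 2 4 6 - D 0 2 3 5 - D 0 1 4 5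
      - D 0 1 3 6 := by
  have hsub : ∀ s ∈ (Finset.univ : Finset (Finset (Fin 7))),
      s ∉ ({{3, 4, 5, 6}, {1, 2, 5, 6}, {1, 2, 3, 4}, {0, 2, 4, 6}, {0, 2, 3, 5}, {0, 1, 4, 5},
        {0, 1, 3, 6}} : Finset (Finset (Fin 7))) → (psi7 s : ℝ) = 0 := by
    intro s _ hs
    simp only [Finset.mem_insert, Finset.mem_singleton, not_or] at hs
    simp [psi7, hs]
  unfold evalForm
  rw [← Finset.sum_subset (Finset.subset_univ _)
    (fun s h1 h2 => by rw [hsub s h1 h2, zero_mul])]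
  rw [Finset.sum_insert (by decide), Finset.sum_insert (by decide), Finset.sum_insert (by decide),
    Finset.sum_insert (by decide), Finset.sum_insert (by decide), Finset.sum_insert (by decide),
    Finset.sum_singleton]
  rw [h_det' v 3 4 5 6 (by decide), h_det' v 1 2 5 6 (by decide), h_det' v 1 2 3 4 (by decide),
    h_det' v 0 2 4 6 (by decide), h_det' v 0 2 3 5 (by decide), h_det' v 0 1 4 5 (by decide),
    h_det' v 0 1 3 6 (by decide)]
  subst hD
  have p1 : (psi7 {3, 4, 5, 6} : ℝ) = 1 := by simp +decide [psi7]
  have p2 : (psi7 {1, 2, 5, 6} : ℝ) = 1 := by simp +decide [psi7]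
  have p3 : (psi7 {1, 2, 3, 4} : ℝ) = 1 := by simp +decide [psi7]
  have p4 : (psi7 {0, 2, 4, 6} : ℝ) = 1 := by simp +decide [psi7]
  have p5 : (psi7 {0, 2, 3, 5} : ℝ) = -1 := by simp +decide [psi7]
  have p6 : (psi7 {0, 1, 4, 5} : ℝ) = -1 := by simp +decide [psi7]
  have p7 : (psi7 {0, 1, 3, 6} : ℝ) = -1 := by simp +decide [psi7]
  rw [p1, p2, p3, p4, p5, p6, p7]
  ring

theorem h_det4 (M : Fin 4 → Fin 4 → ℝ) : Matrix.det (Matrix.of M) =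
    M 0 0 * (M 1 1 * (M 2 2 * M 3 3 - M 2 3 * M 3 2) - M 1 2 * (M 2 1 * M 3 3 - M 2 3 * M 3 1)
      + M 1 3 * (M 2 1 * M 3 2 - M 2 2 * M 3 1))
    - M 0 1 * (M 1 0 * (M 2 2 * M 3 3 - M 2 3 * M 3 2) - M 1 2 * (M 2 0 * M 3 3 - M 2 3 * M 3 0)
      + M 1 3 * (M 2 0 * M 3 2 - M 2 2 * M 3 0))
    + M 0 2 * (M 1 0 * (M 2 1 * M 3 3 - M 2 3 * M 3 1) - M 1 1 * (M 2 0 * M 3 3 - M 2 3 * M 3 0)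
      + M 1 3 * (M 2 0 * M 3 1 - M 2 1 * M 3 0))
    - M 0 3 * (M 1 0 * (M 2 1 * M 3 2 - M 2 2 * M 3 1) - M 1 1 * (M 2 0 * M 3 2 - M 2 2 * M 3 0)
      + M 1 2 * (M 2 0 * M 3 1 - M 2 1 * M 3 0)) := by
  simp [Matrix.det_succ_row_zero, Fin.sum_univ_succ, Fin.succAbove]
  ring

theorem h_vA (f : (Fin 3 → ℝ) → (Fin 4 → ℝ)) (x : Fin 3 → ℝ) (j : Fin 3) :
    vA f x j = ![if j = 0 then 1 else 0, if j = 1 then 1 else 0, if j = 2 then 1 else 0,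
      pd f x j 0, pd f x j 1, pd f x j 2, pd f x j 3] := by
  funext i
  unfold vA
  fin_cases j <;> fin_cases i <;> simp +decide [Fin.sum_univ_four, Pi.single_apply]

theorem h_eval (f : (Fin 3 → ℝ) → (Fin 4 → ℝ)) (x : Fin 3 → ℝ) (w : Fin 7 → ℝ) :
    evalForm psi7 ![vA f x 0, vA f x 1, vA f x 2, w] =
      - hE (pd f x) 0 * (w 3 - ∑ j, pd f x j 0 * w (xj j))
      + hE (pd f x) 1 * (w 4 - ∑ j, pd f x j 1 * w (xj j))
      - hE (pd f x) 2 * (w 5 - ∑ j, pd f x j 2 * w (xj j))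
      + hE (pd f x) 3 * (w 6 - ∑ j, pd f x j 3 * w (xj j)) := by
  have x0 : xj 0 = 0 := rfl
  have x1 : xj 1 = 1 := rfl
  have x2 : xj 2 = 2 := rfl
  rw [h_eval_sum _ _ rfl]
  simp only [h_det4, h_vA]
  simp [hE, hdet, Fin.sum_univ_three, x0, x1, x2]
  ring

theorem h_one (f : (Fin 3 → ℝ) → (Fin 4 → ℝ)) (x : Fin 3 → ℝ) :
    (∀ w : Fin 7 → ℝ, evalForm psi7 ![vA f x 0, vA f x 1, vA f x 2, w] = 0) ↔
    ∀ a, hE (pd f x) a = 0 := by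
  simp only [h_eval]
  constructor
  · intro h a
    have h1 := h (Pi.single (ya a) 1)
    fin_cases a <;>
      simpa +decide [Fin.sum_univ_three, Pi.single_apply] using h1
  · intro h w
    simp [h]

/-- Proposition 4.1.  The following are equivalent:
(1) the graph `S` is associative with an appropriate orientation
    (`*₇φ(v₁,v₂,v₃,·) = 0` on `B`);
(2) `(F_∇^S)³/6 + F_∇^S ∧ *₇φ = 0` on `B`;
(3) `(F_∇^S)³/6 + F_∇^S ∧ *₇φ = 0` and `φ ∧ *₇((F_∇^S)²) = 0` on `B`. -/
theorem statement6 (B : Set (Fin 3 → ℝ)) (hB : IsOpen B)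
    (f : (Fin 3 → ℝ) → (Fin 4 → ℝ)) (hf : ContDiffOn ℝ (⊤ : ℕ∞) f B) :
    ((∀ x ∈ B, ∀ w : Fin 7 → ℝ,
        evalForm psi7 ![vA f x 0, vA f x 1, vA f x 2, w] = 0) ↔
      (∀ x ∈ B,
        (6 : ℂ)⁻¹ • wedge (FSA f x) (wedge (FSA f x) (FSA f x)) +
          wedge (FSA f x) psi7 = 0)) ∧
    ((∀ x ∈ B, ∀ w : Fin 7 → ℝ,
        evalForm psi7 ![vA f x 0, vA f x 1, vA f x 2, w] = 0) ↔
      (∀ x ∈ B,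
        ((6 : ℂ)⁻¹ • wedge (FSA f x) (wedge (FSA f x) (FSA f x)) +
          wedge (FSA f x) psi7 = 0) ∧
        wedge phi7 (hstar (wedge (FSA f x) (FSA f x))) = 0)) := by
  simp only [h_one, h_two]
  refine ⟨trivial, ?_⟩
  exact ⟨fun h x hx => ⟨h x hx, h_three f x (h x hx)⟩, fun h x hx => (h x hx).1⟩

end FMpaper
end
end

section
/- Let B ⊂ ℝ³ be open and f = (f⁴,…,f⁷): B → ℝ⁴ smooth, with Fourier–Mukai curvature F_∇^S as in the context. Then at every point of B: ( 1 + ½⟨(F_∇^S)², *₇φ⟩ )² + ‖ *₇φ ∧ F_∇^S + (1/6)(F_∇^S)³ ‖² + ¼‖ φ ∧ *₇((F_∇^S)²) ‖² = det( id_{ℝ⁷} + (−√−1·F_∇^S)^♯ ). -/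
open scoped BigOperators

noncomputable section

namespace FMpaper

variable {K : Type*} [NormedField K] [NormedAlgebra ℝ K]

variable {n : ℕ}

set_option linter.unusedSimpArgs false

def tI (k : Fin 3 × Fin 4) : Finset (Fin 7) := {xj k.1, ya k.2}

/-- computable sign -/
def sg (s t : Finset (Fin 7)) : ℤ :=
  if (((s ×ˢ t).filter (fun p => p.2 < p.1)).card) % 2 = 0 then 1 else -1

lemma signMerge_eq (s t : Finset (Fin 7)) : (signMerge s t : ℝ) = (sg s t : ℝ) := by
  unfold signMerge sg
  split_ifs with h
  · rw [Even.neg_one_pow (Nat.even_iff.2 h)]; simp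
  · rw [Odd.neg_one_pow (Nat.odd_iff.2 (by omega))]; simp

lemma wedge_cast (α β : Form ℝ 7) (u) :
    wedge (fun s => (α s : ℂ)) (fun s => (β s : ℂ)) u = ((wedge α β u : ℝ) : ℂ) := by
  simp [wedge, signMerge]

lemma psi7_cast : (psi7 : Form ℂ 7) = fun s => ((psi7 s : ℝ) : ℂ) := by
  funext s; unfold psi7; split_ifs <;> simp
lemma phi7_cast : (phi7 : Form ℂ 7) = fun s => ((phi7 s : ℝ) : ℂ) := by
  funext s; unfold phi7; split_ifs <;> simp

def Gm (A : Fin 3 → Fin 4 → ℝ) : Form ℝ 7 := fun u => ∑ k, A k.1 k.2 * if u = tI k then 1 else 0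

lemma wedge_e1_s7 (i j : Fin 7) (h : i < j) : wedge (e1 i : Form ℝ 7) (e1 j) = fun u => if u = {i, j} then 1 else 0 := by
  funext u
  unfold wedge e1
  split_ifs with hu
  · subst hu
    rw [Finset.sum_eq_single {i}]
    · have : ({i, j} : Finset (Fin 7)) \ {i} = {j} := by
        ext x; simp; constructor
        · rintro ⟨rfl | rfl, h2⟩ <;> simp_all
        · rintro rfl; exact ⟨Or.inr rfl, h.ne'⟩
      have h3 : Finset.filter (fun p : Fin 7 × Fin 7 => p.2 < p.1) (({i} : Finset (Fin 7)) ×ˢ {j}) = ∅ := by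
        ext ⟨a, b⟩; simp; rintro rfl rfl; exact h.le
      simp only [this, signMerge, h3]; simp
    · intro s _ hs; simp [hs]
    · simp
  · apply Finset.sum_eq_zero
    intro s hs
    by_cases h1 : s = {i}
    · by_cases h2 : u \ s = {j}
      · exfalso; apply hu
        rw [← Finset.union_sdiff_of_subset (Finset.mem_powerset.1 hs), h2, h1]; rfl
      · simp [h2]
    · simp [h1]

lemma gammaA_eq (f x) : gammaA f x = Gm (pd f x) := by
  funext u
  have : ∀ j a, xj j < ya a := by decide
  simp only [gammaA, Gm, Fintype.sum_prod_type, Finset.sum_apply, Pi.smul_apply, wedge_e1_s7 _ _ (this _ _), tI, smul_eq_mul]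
  rfl

lemma wedge_Gm_left (A) (β : Form ℝ 7) (u) : wedge (Gm A) β u =
    ∑ k, A k.1 k.2 * if tI k ⊆ u then (sg (tI k) (u \ tI k) : ℝ) * β (u \ tI k) else 0 := by
  simp only [wedge, Gm, signMerge_eq, Finset.mul_sum, Finset.sum_mul]
  rw [Finset.sum_comm]
  refine Finset.sum_congr rfl fun k _ => ?_
  split_ifs with h
  · rw [Finset.sum_eq_single (tI k)]
    · simp; ring
    · intro s _ hs; simp [hs]
    · simp [h]
  · rw [mul_zero]
    apply Finset.sum_eq_zero
    intro s hs
    have : s ≠ tI k := by rintro rfl; exact h (Finset.mem_powerset.1 hs)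
    simp [this]

lemma wedge_list_left (l : List (Finset (Fin 7) × ℤ)) (β : Form ℝ 7) (u) :
    wedge (fun s => (l.map fun p => (p.2 : ℝ) * if s = p.1 then 1 else 0).sum) β u =
    (l.map fun p => (p.2 : ℝ) * if p.1 ⊆ u then (sg p.1 (u \ p.1) : ℝ) * β (u \ p.1) else 0).sum := by
  induction l with
  | nil => simp [wedge]
  | cons p l ih =>
    simp only [List.map_cons, List.sum_cons]
    rw [← ih]
    simp only [wedge, mul_add, add_mul, Finset.sum_add_distrib, signMerge_eq]
    congr 1
    split_ifs with h
    · rw [Finset.sum_eq_single p.1]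
      · simp; ring
      · intro s _ hs; simp [hs]
      · simp [h]
    · rw [mul_zero]
      apply Finset.sum_eq_zero
      intro s hs
      have : s ≠ p.1 := by rintro rfl; exact h (Finset.mem_powerset.1 hs)
      simp [this]

def phiL : List (Finset (Fin 7) × ℤ) :=
  [({0, 1, 2}, 1), ({0, 3, 4}, 1), ({0, 5, 6}, 1), ({1, 3, 5}, 1), ({1, 4, 6}, -1),
   ({2, 3, 6}, -1), ({2, 4, 5}, -1)]

def psiL : List (Finset (Fin 7) × ℤ) :=
  [({3, 4, 5, 6}, 1), ({1, 2, 5, 6}, 1), ({1, 2, 3, 4}, 1), ({0, 2, 4, 6}, 1), ({0, 2, 3, 5}, -1),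
   ({0, 1, 4, 5}, -1), ({0, 1, 3, 6}, -1)]

lemma phi7_eq : (phi7 : Form ℝ 7) = fun s => (phiL.map fun p => (p.2 : ℝ) * if s = p.1 then 1 else 0).sum := by
  have key : ∀ s : Finset (Fin 7), ((
    if s = ({0, 1, 2} : Finset (Fin 7)) then 1 else
    if s = ({0, 3, 4} : Finset (Fin 7)) then 1 else
    if s = ({0, 5, 6} : Finset (Fin 7)) then 1 else
    if s = ({1, 3, 5} : Finset (Fin 7)) then 1 else
    if s = ({1, 4, 6} : Finset (Fin 7)) then -1 else
    if s = ({2, 3, 6} : Finset (Fin 7)) then -1 else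
    if s = ({2, 4, 5} : Finset (Fin 7)) then -1 else 0) : ℤ) =
      (phiL.map fun p => p.2 * if s = p.1 then 1 else 0).sum := by decide +kernel
  funext s
  have h := congrArg (Int.cast : ℤ → ℝ) (key s)
  simp only [phiL, List.map_cons, List.map_nil, List.sum_cons, List.sum_nil] at h
  push_cast at h
  simp only [phi7, phiL, List.map_cons, List.map_nil, List.sum_cons, List.sum_nil]
  push_cast
  exact h

lemma psi7_eq : (psi7 : Form ℝ 7) = fun s => (psiL.map fun p => (p.2 : ℝ) * if s = p.1 then 1 else 0).sum := by
  have key : ∀ s : Finset (Fin 7), ((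
    if s = ({3, 4, 5, 6} : Finset (Fin 7)) then 1 else
    if s = ({1, 2, 5, 6} : Finset (Fin 7)) then 1 else
    if s = ({1, 2, 3, 4} : Finset (Fin 7)) then 1 else
    if s = ({0, 2, 4, 6} : Finset (Fin 7)) then 1 else
    if s = ({0, 2, 3, 5} : Finset (Fin 7)) then -1 else
    if s = ({0, 1, 4, 5} : Finset (Fin 7)) then -1 else
    if s = ({0, 1, 3, 6} : Finset (Fin 7)) then -1 else 0) : ℤ) =
      (psiL.map fun p => p.2 * if s = p.1 then 1 else 0).sum := by decide +kernel
  funext s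
  have h := congrArg (Int.cast : ℤ → ℝ) (key s)
  simp only [psiL, List.map_cons, List.map_nil, List.sum_cons, List.sum_nil] at h
  push_cast at h
  simp only [psi7, psiL, List.map_cons, List.map_nil, List.sum_cons, List.sum_nil]
  push_cast
  exact h


lemma wedge_grade {a b : ℕ} {α β : Form ℝ 7} (ha : isGrade a α) (hb : isGrade b β) :
    isGrade (a + b) (wedge α β) := by
  intro u hu
  apply Finset.sum_eq_zero
  intro s hs
  by_cases h1 : s.card = a
  · by_cases h2 : (u \ s).card = b
    · exfalso; apply hu
      have := Finset.card_sdiff_add_card_eq_card (Finset.mem_powerset.1 hs)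
      omega
    · simp [hb _ h2]
  · simp [ha _ h1]

lemma hstar_grade {a b : ℕ} (hab : a + b = 7) {α : Form ℝ 7} (ha : isGrade a α) : isGrade b (hstar α) := by
  intro u hu
  have : uᶜ.card ≠ a := by
    have h1 := Finset.card_compl u
    have h2 := Finset.card_le_univ u
    simp at h1 h2
    omega
  simp [hstar, ha _ this]

lemma Gm_grade (A) : isGrade 2 (Gm A) := by
  intro u hu
  apply Finset.sum_eq_zero
  intro k _
  have : ∀ k, (tI k).card = 2 := by decide +kernel
  have : u ≠ tI k := by rintro rfl; exact hu (this k)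
  simp [this]

lemma psi_grade : isGrade 4 (psi7 : Form ℝ 7) := by
  intro u hu
  have h : ∀ u : Finset (Fin 7), u.card ≠ 4 → ∀ p ∈ psiL, u ≠ p.1 := by decide +kernel
  rw [psi7_eq]
  apply List.sum_eq_zero
  intro x hx
  obtain ⟨p, hp, rfl⟩ := List.mem_map.1 hx
  simp [h u hu p hp]

lemma phi_grade : isGrade 3 (phi7 : Form ℝ 7) := by
  intro u hu
  have h : ∀ u : Finset (Fin 7), u.card ≠ 3 → ∀ p ∈ phiL, u ≠ p.1 := by decide +kernel
  rw [phi7_eq]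
  apply List.sum_eq_zero
  intro x hx
  obtain ⟨p, hp, rfl⟩ := List.mem_map.1 hx
  simp [h u hu p hp]

lemma sum_six (F : Finset (Fin 7) → ℝ) (hF : ∀ s, s.card ≠ 6 → F s = 0) :
    ∑ s, F s = ∑ i : Fin 7, F {i}ᶜ := by
  have hinj : Set.InjOn (fun i : Fin 7 => ({i}ᶜ : Finset (Fin 7))) (Finset.univ : Finset (Fin 7)) := by
    intro i _ j _ h
    simpa using h
  rw [← Finset.sum_image (f := F) hinj]
  symm
  apply Finset.sum_subset (Finset.subset_univ _)
  intro s _ hs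
  apply hF
  intro h6
  have h : ∀ s : Finset (Fin 7), s.card = 6 → ∃ i : Fin 7, ({i}ᶜ : Finset (Fin 7)) = s := by decide +kernel
  obtain ⟨i, hi⟩ := h s h6
  exact hs (Finset.mem_image.2 ⟨i, Finset.mem_univ _, hi⟩)

lemma inner_psi (α : Form ℝ 7) : inner' α psi7 = (psiL.map fun p => (p.2 : ℝ) * α p.1).sum := by
  rw [psi7_eq]
  simp only [inner']
  generalize psiL = l
  induction l with
  | nil => simp
  | cons p l ih =>
    simp only [List.map_cons, List.sum_cons, mul_add, Finset.sum_add_distrib, ih]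
    congr 1
    rw [Finset.sum_eq_single p.1]
    · simp; ring
    · intro s _ hs; simp [hs]
    · simp

lemma Gm_tI (A) (k) : Gm A (tI k) = A k.1 k.2 := by
  have hinj : ∀ k l, tI k = tI l → k = l := by decide +kernel
  unfold Gm
  rw [Finset.sum_eq_single k]
  · simp
  · intro l _ hl
    have : tI k ≠ tI l := fun h => hl (hinj _ _ h).symm
    simp [this]
  · simp

lemma mat_eq (A) : ((1 : Matrix (Fin 7) (Fin 7) ℝ) + mat2 (Gm A)).det =
   (1 + Matrix.of A * (Matrix.of A).transpose).det := by
  have hxy : ∀ j a, xj j < ya a := by decide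
  have hz : ∀ i j : Fin 7, (i < 3 ↔ j < 3) → ∀ k, ({i, j} : Finset (Fin 7)) ≠ tI k := by decide +kernel
  have hz' : ∀ i j : Fin 7, (i < 3 ↔ j < 3) → Gm A {i, j} = 0 := by
    intro i j h
    apply Finset.sum_eq_zero
    intro k _
    simp [hz i j h k]
  let e : Fin 3 ⊕ Fin 4 ≃ Fin 7 := finSumFinEquiv
  have hm : ((1 : Matrix (Fin 7) (Fin 7) ℝ) + mat2 (Gm A)).submatrix e e =
      Matrix.fromBlocks 1 (Matrix.of A) (-(Matrix.of A).transpose) 1 := by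
    have el : ∀ j, e (Sum.inl j) = xj j := fun j => rfl
    have er : ∀ a, e (Sum.inr a) = ya a := by decide
    ext p q
    rcases p with j | a <;> rcases q with k | b
    · have h1 : ∀ j k, (xj j < 3 ↔ xj k < 3) := by decide
      have h2 : ∀ j k, (xj j = xj k ↔ j = k) := by decide
      simp [el, mat2, hz' _ _ (h1 j k), Matrix.one_apply, h2]
    · have := Gm_tI A (j, b)
      simp only [tI] at this
      simp [el, er, mat2, hxy, this, Matrix.one_apply, (hxy j b).ne]
    · have := Gm_tI A (k, a)
      simp only [tI] at this
      rw [Finset.pair_comm] at this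
      simp [el, er, mat2, hxy, this, Matrix.one_apply, (hxy k a).ne', (hxy k a).not_gt]
    · have h1 : ∀ j k, (ya j < 3 ↔ ya k < 3) := by decide
      have h2 : ∀ j k, (ya j = ya k ↔ j = k) := by decide
      simp [er, mat2, hz' _ _ (h1 a b), Matrix.one_apply, h2]
  rw [← Matrix.det_submatrix_equiv_self e, hm, Matrix.det_fromBlocks_one₂₂]
  simp

lemma sgq (A) (u) : wedge (Gm A) (Gm A) u = ∑ k, ∑ l, A k.1 k.2 * A l.1 l.2 *
   ((if tI k ⊆ u then sg (tI k) (u \ tI k) * (if u \ tI k = tI l then 1 else 0) else 0 : ℤ) : ℝ) := by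
  rw [wedge_Gm_left]
  refine Finset.sum_congr rfl fun k _ => ?_
  split_ifs with h
  · simp only [Gm, Finset.mul_sum]
    refine Finset.sum_congr rfl fun l _ => ?_
    push_cast
    ring
  · simp

set_option maxHeartbeats 4000000 in
lemma c_inner (A) : inner' (wedge (Gm A) (Gm A)) psi7 = 2 * ((-1) * A 1 2 * A 2 3 + (1) * A 1 3 * A 2 2 + (-1) * A 1 0 * A 2 1 + (1) * A 1 1 * A 2 0 + (-1) * A 0 1 * A 2 3 + (1) * A 0 3 * A 2 1 + (1) * A 0 0 * A 2 2 + (-1) * A 0 2 * A 2 0 + (1) * A 0 1 * A 1 2 + (-1) * A 0 2 * A 1 1 + (1) * A 0 0 * A 1 3 + (-1) * A 0 3 * A 1 0) := by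
  rw [inner_psi]
  simp (decide := true) only [Gm, Fintype.sum_prod_type, Fin.sum_univ_three, Fin.sum_univ_four, if_true, if_false, sg,
    List.map_cons, List.map_nil, List.sum_cons, List.sum_nil, phiL, psiL, hstar, signMerge_eq, wedge_Gm_left]
  try norm_num
  try ring

set_option maxHeartbeats 4000000 in
lemma c_psi0 (A) : wedge psi7 (Gm A) {0}ᶜ = 0 := by
  rw [psi7_eq, wedge_list_left]
  simp (decide := true) only [Gm, Fintype.sum_prod_type, Fin.sum_univ_three, Fin.sum_univ_four, if_true, if_false, sg,
    List.map_cons, List.map_nil, List.sum_cons, List.sum_nil, phiL, psiL, hstar, signMerge_eq, wedge_Gm_left]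
  try norm_num
  try ring

set_option maxHeartbeats 4000000 in
lemma c_cub0 (A) : wedge (Gm A) (wedge (Gm A) (Gm A)) {0}ᶜ = 6 * (0) := by
  rw [wedge_Gm_left]
  simp (decide := true) only [Gm, Fintype.sum_prod_type, Fin.sum_univ_three, Fin.sum_univ_four, if_true, if_false, sg,
    List.map_cons, List.map_nil, List.sum_cons, List.sum_nil, phiL, psiL, hstar, signMerge_eq, wedge_Gm_left]
  try norm_num
  try ring

set_option maxHeartbeats 4000000 in
lemma c_phi0 (A) : wedge phi7 (hstar (wedge (Gm A) (Gm A))) {0}ᶜ = 2 * ((-1) * A 0 0 * A 1 2 + (1) * A 0 2 * A 1 0 + (1) * A 0 1 * A 1 3 + (-1) * A 0 3 * A 1 1 + (1) * A 0 0 * A 2 3 + (-1) * A 0 3 * A 2 0 + (1) * A 0 1 * A 2 2 + (-1) * A 0 2 * A 2 1) := by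
  rw [phi7_eq, wedge_list_left]
  simp (decide := true) only [Gm, Fintype.sum_prod_type, Fin.sum_univ_three, Fin.sum_univ_four, if_true, if_false, sg,
    List.map_cons, List.map_nil, List.sum_cons, List.sum_nil, phiL, psiL, hstar, signMerge_eq, wedge_Gm_left]
  try norm_num
  try ring

set_option maxHeartbeats 4000000 in
lemma c_psi1 (A) : wedge psi7 (Gm A) {1}ᶜ = 0 := by
  rw [psi7_eq, wedge_list_left]
  simp (decide := true) only [Gm, Fintype.sum_prod_type, Fin.sum_univ_three, Fin.sum_univ_four, if_true, if_false, sg,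
    List.map_cons, List.map_nil, List.sum_cons, List.sum_nil, phiL, psiL, hstar, signMerge_eq, wedge_Gm_left]
  try norm_num
  try ring

set_option maxHeartbeats 4000000 in
lemma c_cub1 (A) : wedge (Gm A) (wedge (Gm A) (Gm A)) {1}ᶜ = 6 * (0) := by
  rw [wedge_Gm_left]
  simp (decide := true) only [Gm, Fintype.sum_prod_type, Fin.sum_univ_three, Fin.sum_univ_four, if_true, if_false, sg,
    List.map_cons, List.map_nil, List.sum_cons, List.sum_nil, phiL, psiL, hstar, signMerge_eq, wedge_Gm_left]
  try norm_num
  try ring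

set_option maxHeartbeats 4000000 in
lemma c_phi1 (A) : wedge phi7 (hstar (wedge (Gm A) (Gm A))) {1}ᶜ = 2 * ((-1) * A 0 0 * A 1 1 + (1) * A 0 1 * A 1 0 + (-1) * A 0 2 * A 1 3 + (1) * A 0 3 * A 1 2 + (-1) * A 1 0 * A 2 3 + (1) * A 1 3 * A 2 0 + (-1) * A 1 1 * A 2 2 + (1) * A 1 2 * A 2 1) := by
  rw [phi7_eq, wedge_list_left]
  simp (decide := true) only [Gm, Fintype.sum_prod_type, Fin.sum_univ_three, Fin.sum_univ_four, if_true, if_false, sg,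
    List.map_cons, List.map_nil, List.sum_cons, List.sum_nil, phiL, psiL, hstar, signMerge_eq, wedge_Gm_left]
  try norm_num
  try ring

set_option maxHeartbeats 4000000 in
lemma c_psi2 (A) : wedge psi7 (Gm A) {2}ᶜ = 0 := by
  rw [psi7_eq, wedge_list_left]
  simp (decide := true) only [Gm, Fintype.sum_prod_type, Fin.sum_univ_three, Fin.sum_univ_four, if_true, if_false, sg,
    List.map_cons, List.map_nil, List.sum_cons, List.sum_nil, phiL, psiL, hstar, signMerge_eq, wedge_Gm_left]
  try norm_num
  try ring

set_option maxHeartbeats 4000000 in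
lemma c_cub2 (A) : wedge (Gm A) (wedge (Gm A) (Gm A)) {2}ᶜ = 6 * (0) := by
  rw [wedge_Gm_left]
  simp (decide := true) only [Gm, Fintype.sum_prod_type, Fin.sum_univ_three, Fin.sum_univ_four, if_true, if_false, sg,
    List.map_cons, List.map_nil, List.sum_cons, List.sum_nil, phiL, psiL, hstar, signMerge_eq, wedge_Gm_left]
  try norm_num
  try ring

set_option maxHeartbeats 4000000 in
lemma c_phi2 (A) : wedge phi7 (hstar (wedge (Gm A) (Gm A))) {2}ᶜ = 2 * ((1) * A 0 0 * A 2 1 + (-1) * A 0 1 * A 2 0 + (1) * A 0 2 * A 2 3 + (-1) * A 0 3 * A 2 2 + (1) * A 1 0 * A 2 2 + (-1) * A 1 2 * A 2 0 + (-1) * A 1 1 * A 2 3 + (1) * A 1 3 * A 2 1) := by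
  rw [phi7_eq, wedge_list_left]
  simp (decide := true) only [Gm, Fintype.sum_prod_type, Fin.sum_univ_three, Fin.sum_univ_four, if_true, if_false, sg,
    List.map_cons, List.map_nil, List.sum_cons, List.sum_nil, phiL, psiL, hstar, signMerge_eq, wedge_Gm_left]
  try norm_num
  try ring

set_option maxHeartbeats 4000000 in
lemma c_psi3 (A) : wedge psi7 (Gm A) {3}ᶜ = (1) * A 0 1 + (1) * A 1 2 + (-1) * A 2 3 := by
  rw [psi7_eq, wedge_list_left]
  simp (decide := true) only [Gm, Fintype.sum_prod_type, Fin.sum_univ_three, Fin.sum_univ_four, if_true, if_false, sg,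
    List.map_cons, List.map_nil, List.sum_cons, List.sum_nil, phiL, psiL, hstar, signMerge_eq, wedge_Gm_left]
  try norm_num
  try ring

set_option maxHeartbeats 4000000 in
lemma c_cub3 (A) : wedge (Gm A) (wedge (Gm A) (Gm A)) {3}ᶜ = 6 * ((-1) * A 0 1 * A 1 2 * A 2 3 + (1) * A 0 1 * A 1 3 * A 2 2 + (1) * A 0 2 * A 1 1 * A 2 3 + (-1) * A 0 2 * A 1 3 * A 2 1 + (-1) * A 0 3 * A 1 1 * A 2 2 + (1) * A 0 3 * A 1 2 * A 2 1) := by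
  rw [wedge_Gm_left]
  simp (decide := true) only [Gm, Fintype.sum_prod_type, Fin.sum_univ_three, Fin.sum_univ_four, if_true, if_false, sg,
    List.map_cons, List.map_nil, List.sum_cons, List.sum_nil, phiL, psiL, hstar, signMerge_eq, wedge_Gm_left]
  try norm_num
  try ring

set_option maxHeartbeats 4000000 in
lemma c_phi3 (A) : wedge phi7 (hstar (wedge (Gm A) (Gm A))) {3}ᶜ = 2 * (0) := by
  rw [phi7_eq, wedge_list_left]
  simp (decide := true) only [Gm, Fintype.sum_prod_type, Fin.sum_univ_three, Fin.sum_univ_four, if_true, if_false, sg,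
    List.map_cons, List.map_nil, List.sum_cons, List.sum_nil, phiL, psiL, hstar, signMerge_eq, wedge_Gm_left]
  try norm_num
  try ring

set_option maxHeartbeats 4000000 in
lemma c_psi4 (A) : wedge psi7 (Gm A) {4}ᶜ = (1) * A 0 0 + (1) * A 1 3 + (1) * A 2 2 := by
  rw [psi7_eq, wedge_list_left]
  simp (decide := true) only [Gm, Fintype.sum_prod_type, Fin.sum_univ_three, Fin.sum_univ_four, if_true, if_false, sg,
    List.map_cons, List.map_nil, List.sum_cons, List.sum_nil, phiL, psiL, hstar, signMerge_eq, wedge_Gm_left]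
  try norm_num
  try ring

set_option maxHeartbeats 4000000 in
lemma c_cub4 (A) : wedge (Gm A) (wedge (Gm A) (Gm A)) {4}ᶜ = 6 * ((-1) * A 0 0 * A 1 2 * A 2 3 + (1) * A 0 0 * A 1 3 * A 2 2 + (1) * A 0 2 * A 1 0 * A 2 3 + (-1) * A 0 2 * A 1 3 * A 2 0 + (-1) * A 0 3 * A 1 0 * A 2 2 + (1) * A 0 3 * A 1 2 * A 2 0) := by
  rw [wedge_Gm_left]
  simp (decide := true) only [Gm, Fintype.sum_prod_type, Fin.sum_univ_three, Fin.sum_univ_four, if_true, if_false, sg,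
    List.map_cons, List.map_nil, List.sum_cons, List.sum_nil, phiL, psiL, hstar, signMerge_eq, wedge_Gm_left]
  try norm_num
  try ring

set_option maxHeartbeats 4000000 in
lemma c_phi4 (A) : wedge phi7 (hstar (wedge (Gm A) (Gm A))) {4}ᶜ = 2 * (0) := by
  rw [phi7_eq, wedge_list_left]
  simp (decide := true) only [Gm, Fintype.sum_prod_type, Fin.sum_univ_three, Fin.sum_univ_four, if_true, if_false, sg,
    List.map_cons, List.map_nil, List.sum_cons, List.sum_nil, phiL, psiL, hstar, signMerge_eq, wedge_Gm_left]
  try norm_num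
  try ring

set_option maxHeartbeats 4000000 in
lemma c_psi5 (A) : wedge psi7 (Gm A) {5}ᶜ = (1) * A 0 3 + (-1) * A 1 0 + (1) * A 2 1 := by
  rw [psi7_eq, wedge_list_left]
  simp (decide := true) only [Gm, Fintype.sum_prod_type, Fin.sum_univ_three, Fin.sum_univ_four, if_true, if_false, sg,
    List.map_cons, List.map_nil, List.sum_cons, List.sum_nil, phiL, psiL, hstar, signMerge_eq, wedge_Gm_left]
  try norm_num
  try ring

set_option maxHeartbeats 4000000 in
lemma c_cub5 (A) : wedge (Gm A) (wedge (Gm A) (Gm A)) {5}ᶜ = 6 * ((-1) * A 0 0 * A 1 1 * A 2 3 + (1) * A 0 0 * A 1 3 * A 2 1 + (1) * A 0 1 * A 1 0 * A 2 3 + (-1) * A 0 1 * A 1 3 * A 2 0 + (-1) * A 0 3 * A 1 0 * A 2 1 + (1) * A 0 3 * A 1 1 * A 2 0) := by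
  rw [wedge_Gm_left]
  simp (decide := true) only [Gm, Fintype.sum_prod_type, Fin.sum_univ_three, Fin.sum_univ_four, if_true, if_false, sg,
    List.map_cons, List.map_nil, List.sum_cons, List.sum_nil, phiL, psiL, hstar, signMerge_eq, wedge_Gm_left]
  try norm_num
  try ring

set_option maxHeartbeats 4000000 in
lemma c_phi5 (A) : wedge phi7 (hstar (wedge (Gm A) (Gm A))) {5}ᶜ = 2 * (0) := by
  rw [phi7_eq, wedge_list_left]
  simp (decide := true) only [Gm, Fintype.sum_prod_type, Fin.sum_univ_three, Fin.sum_univ_four, if_true, if_false, sg,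
    List.map_cons, List.map_nil, List.sum_cons, List.sum_nil, phiL, psiL, hstar, signMerge_eq, wedge_Gm_left]
  try norm_num
  try ring

set_option maxHeartbeats 4000000 in
lemma c_psi6 (A) : wedge psi7 (Gm A) {6}ᶜ = (1) * A 0 2 + (-1) * A 1 1 + (-1) * A 2 0 := by
  rw [psi7_eq, wedge_list_left]
  simp (decide := true) only [Gm, Fintype.sum_prod_type, Fin.sum_univ_three, Fin.sum_univ_four, if_true, if_false, sg,
    List.map_cons, List.map_nil, List.sum_cons, List.sum_nil, phiL, psiL, hstar, signMerge_eq, wedge_Gm_left]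
  try norm_num
  try ring

set_option maxHeartbeats 4000000 in
lemma c_cub6 (A) : wedge (Gm A) (wedge (Gm A) (Gm A)) {6}ᶜ = 6 * ((-1) * A 0 0 * A 1 1 * A 2 2 + (1) * A 0 0 * A 1 2 * A 2 1 + (1) * A 0 1 * A 1 0 * A 2 2 + (-1) * A 0 1 * A 1 2 * A 2 0 + (-1) * A 0 2 * A 1 0 * A 2 1 + (1) * A 0 2 * A 1 1 * A 2 0) := by
  rw [wedge_Gm_left]
  simp (decide := true) only [Gm, Fintype.sum_prod_type, Fin.sum_univ_three, Fin.sum_univ_four, if_true, if_false, sg,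
    List.map_cons, List.map_nil, List.sum_cons, List.sum_nil, phiL, psiL, hstar, signMerge_eq, wedge_Gm_left]
  try norm_num
  try ring

set_option maxHeartbeats 4000000 in
lemma c_phi6 (A) : wedge phi7 (hstar (wedge (Gm A) (Gm A))) {6}ᶜ = 2 * (0) := by
  rw [phi7_eq, wedge_list_left]
  simp (decide := true) only [Gm, Fintype.sum_prod_type, Fin.sum_univ_three, Fin.sum_univ_four, if_true, if_false, sg,
    List.map_cons, List.map_nil, List.sum_cons, List.sum_nil, phiL, psiL, hstar, signMerge_eq, wedge_Gm_left]
  try norm_num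
  try ring


set_option maxHeartbeats 4000000 in
lemma real_main (A : Fin 3 → Fin 4 → ℝ) :
    (1 - 2⁻¹ * inner' (wedge (Gm A) (Gm A)) psi7) ^ 2 +
      (∑ i : Fin 7, (wedge psi7 (Gm A) {i}ᶜ - 6⁻¹ * wedge (Gm A) (wedge (Gm A) (Gm A)) {i}ᶜ) ^ 2) +
      4⁻¹ * (∑ i : Fin 7, (wedge phi7 (hstar (wedge (Gm A) (Gm A))) {i}ᶜ) ^ 2) =
    ((1 : Matrix (Fin 7) (Fin 7) ℝ) + mat2 (Gm A)).det := by
  rw [mat_eq, Matrix.det_fin_three]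
  simp only [Fin.sum_univ_seven, c_inner, c_psi0, c_cub0, c_phi0, c_psi1, c_cub1, c_phi1, c_psi2, c_cub2, c_phi2, c_psi3, c_cub3, c_phi3, c_psi4, c_cub4, c_phi4, c_psi5, c_cub5, c_phi5, c_psi6, c_cub6, c_phi6]
  simp only [Matrix.add_apply, Matrix.mul_apply, Fin.sum_univ_four, Matrix.transpose_apply, Matrix.of_apply,
    Matrix.one_apply]
  simp (decide := true) only [if_true, if_false]
  ring

lemma FSA_eq (f x) : FSA f x = fun s => Complex.I * ((Gm (pd f x) s : ℝ) : ℂ) := by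
  funext s; rw [FSA, gammaA_eq]

lemma wedge_smul_l (c : ℂ) (α β : Form ℂ 7) (u) : wedge (fun s => c * α s) β u = c * wedge α β u := by
  simp only [wedge, Finset.mul_sum]
  exact Finset.sum_congr rfl fun s _ => by ring

lemma wedge_smul_r (c : ℂ) (α β : Form ℂ 7) (u) : wedge α (fun s => c * β s) u = c * wedge α β u := by
  simp only [wedge, Finset.mul_sum]
  exact Finset.sum_congr rfl fun s _ => by ring

lemma fnorm_sq (α : Form ℂ 7) (β : Form ℝ 7) (h : ∀ s, ‖α s‖ ^ 2 = β s ^ 2) (hβ : isGrade 6 β) :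
    fnorm α ^ 2 = ∑ i : Fin 7, β {i}ᶜ ^ 2 := by
  unfold fnorm
  rw [Real.sq_sqrt (Finset.sum_nonneg fun s _ => by positivity), Finset.sum_congr rfl fun s _ => h s,
    sum_six (fun s => β s ^ 2) (fun s hs => by simp [hβ s hs])]

/-- Lemma 4.3, the mirror associator equality.  At every point of `B`:
`(1 + ½⟨(F_∇^S)², *₇φ⟩)² + ‖*₇φ ∧ F_∇^S + (1/6)(F_∇^S)³‖² + ¼‖φ ∧ *₇((F_∇^S)²)‖²
  = det(id + (-√-1 F_∇^S)♯)`. -/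
theorem statement7 (B : Set (Fin 3 → ℝ)) (hB : IsOpen B)
    (f : (Fin 3 → ℝ) → (Fin 4 → ℝ)) (hf : ContDiffOn ℝ (⊤ : ℕ∞) f B) :
    ∀ x ∈ B,
      (1 + (2 : ℂ)⁻¹ * inner' (wedge (FSA f x) (FSA f x)) psi7) ^ 2 +
        (fnorm (wedge psi7 (FSA f x) + (6 : ℂ)⁻¹ •
          wedge (FSA f x) (wedge (FSA f x) (FSA f x))) : ℂ) ^ 2 +
        (4 : ℂ)⁻¹ * (fnorm (wedge phi7 (hstar (wedge (FSA f x) (FSA f x)))) : ℂ) ^ 2 =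
      (((1 : Matrix (Fin 7) (Fin 7) ℝ) + mat2 (gammaA f x)).det : ℂ) := by
  intro x _
  have hI : Complex.I * Complex.I = -1 := Complex.I_mul_I
  set A := pd f x with hA
  have hFF : wedge (FSA f x) (FSA f x) = fun u => -((wedge (Gm A) (Gm A) u : ℝ) : ℂ) := by
    funext u
    rw [FSA_eq, wedge_smul_l, wedge_smul_r, wedge_cast, ← mul_assoc, hI, neg_one_mul]
  have h1 : inner' (wedge (FSA f x) (FSA f x)) psi7 =
      -((inner' (wedge (Gm A) (Gm A)) psi7 : ℝ) : ℂ) := by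
    rw [hFF, psi7_cast]
    simp [inner']
  have g2 : isGrade 4 (wedge (Gm A) (Gm A)) := wedge_grade (Gm_grade A) (Gm_grade A)
  have h2 : fnorm (wedge psi7 (FSA f x) + (6 : ℂ)⁻¹ •
      wedge (FSA f x) (wedge (FSA f x) (FSA f x))) ^ 2 =
      ∑ i : Fin 7, (wedge psi7 (Gm A) {i}ᶜ - 6⁻¹ * wedge (Gm A) (wedge (Gm A) (Gm A)) {i}ᶜ) ^ 2 := by
    refine fnorm_sq _ (fun u => wedge psi7 (Gm A) u - 6⁻¹ * wedge (Gm A) (wedge (Gm A) (Gm A)) u) ?_ ?_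
    · intro s
      have e1 : wedge psi7 (FSA f x) s = Complex.I * ((wedge psi7 (Gm A) s : ℝ) : ℂ) := by
        rw [FSA_eq, wedge_smul_r, psi7_cast, wedge_cast]
      have e2 : wedge (FSA f x) (wedge (FSA f x) (FSA f x)) s =
          -(Complex.I * ((wedge (Gm A) (wedge (Gm A) (Gm A)) s : ℝ) : ℂ)) := by
        rw [hFF, FSA_eq, wedge_smul_l]
        have : (fun u => -((wedge (Gm A) (Gm A) u : ℝ) : ℂ)) =
          fun u => (-1 : ℂ) * ((wedge (Gm A) (Gm A) u : ℝ) : ℂ) := by funext u; ring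
        rw [this, wedge_smul_r, wedge_cast]; ring
      have e3 : (wedge psi7 (FSA f x) + (6 : ℂ)⁻¹ • wedge (FSA f x) (wedge (FSA f x) (FSA f x))) s =
          Complex.I * ((wedge psi7 (Gm A) s - 6⁻¹ * wedge (Gm A) (wedge (Gm A) (Gm A)) s : ℝ) : ℂ) := by
        rw [Pi.add_apply, Pi.smul_apply, e1, e2]
        push_cast
        rw [smul_eq_mul]
        ring
      rw [e3, norm_mul, Complex.norm_I, one_mul, Complex.norm_real, Real.norm_eq_abs, sq_abs]
    · intro s hs
      have a1 := wedge_grade psi_grade (Gm_grade A) s hs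
      have a2 := wedge_grade (Gm_grade A) g2 s hs
      simp [a1, a2]
  have h3 : fnorm (wedge phi7 (hstar (wedge (FSA f x) (FSA f x)))) ^ 2 =
      ∑ i : Fin 7, (wedge phi7 (hstar (wedge (Gm A) (Gm A))) {i}ᶜ) ^ 2 := by
    refine fnorm_sq _ _ ?_ (wedge_grade phi_grade (hstar_grade (a := 4) (b := 3) rfl g2))
    intro s
    have : hstar (wedge (FSA f x) (FSA f x)) =
        fun u => (-1 : ℂ) * ((hstar (wedge (Gm A) (Gm A)) u : ℝ) : ℂ) := by
      rw [hFF]; funext u; simp [hstar, signMerge]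
    rw [this, wedge_smul_r, phi7_cast, wedge_cast]
    simp
  rw [gammaA_eq, ← real_main, h1, ← Complex.ofReal_pow, ← Complex.ofReal_pow, h2, h3]
  push_cast
  ring

end FMpaper
end
end
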